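/- arXiv:1608.04183 — 2 statements merged into one kernel-verified Lean document; each statement's English description precedes it below -/
import Mathlib

section
/- Fix a prime p and an integer n ≥ 1, set e_n = p^n − 1, and fix an algebraic closure Ω of ℚ_p. Let K ⊆ Ω be a finite extension of ℚ_p, let K_n = K(ζ) where ζ ∈ Ω is a primitive e_n-th root of unity, and let L_n ⊆ Ω be the field generated over K_n by all x ∈ Ω with x^{e_n} ∈ K_n. Let M ⊆ Ω be a finite Galois extension of K containing L_n such that Gal(M / L_n) is abelian of order p^n with every element of order dividing p, and such that the only subgroups of Gal(M / L_n) that are normal in Gal(M / K) are the trivial subgroup and Gal(M / L_n) itself. Then there exists a primitive extension E ⊆ Ω of K with [E : K] = p^n and E·L_n = M. -/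
section
open scoped IsMulCommutative

theorem aux_conj {G : Type*} [Group G] [Finite G] (S B C : Subgroup G) [S.Normal]
    [IsMulCommutative S]
    (hco : Nat.Coprime (Nat.card S) (Nat.card B)) (hSC : ∀ x ∈ S, x ∈ C → x = 1)
    (hBC : ∀ b ∈ B, ∃ s ∈ S, s * b ∈ C) :
    ∃ s ∈ S, ∀ b ∈ B, s * b * s⁻¹ ∈ C := by
  classical
  have : Fintype B := Fintype.ofFinite B
  have h1 : ∀ b : B, ∃ s : S, (s : G) * b ∈ C := fun b => by
    obtain ⟨s, hs, h⟩ := hBC b b.2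
    exact ⟨⟨s, hs⟩, h⟩
  choose f hf using h1
  have huniq : ∀ (s t : S) (b : G), (s : G) * b ∈ C → (t : G) * b ∈ C → s = t := by
    intro s t b h1 h2
    have h3 := C.mul_mem h1 (C.inv_mem h2)
    have h4 : (s : G) * b * ((t : G) * b)⁻¹ = (s * t⁻¹ : S) := by
      push_cast; group
    rw [h4] at h3
    have h5 := hSC _ (s * t⁻¹).2 h3
    have h6 : s * t⁻¹ = 1 := Subtype.ext h5
    exact mul_inv_eq_one.mp h6
  have hcoc : ∀ b b' : B, f (b * b') = f b * MulAut.conjNormal (b : G) (f b') := by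
    intro b b'
    apply huniq _ _ _ (hf _)
    have := C.mul_mem (hf b) (hf b')
    convert this using 1
    push_cast
    rw [MulAut.conjNormal_apply]
    group
  set t : S := ∏ b : B, f b with ht
  have hpow : ∀ b : B, t = f b ^ Nat.card B * MulAut.conjNormal (b : G) t := by
    intro b
    calc t = ∏ b' : B, f (b * b') := (Fintype.prod_equiv (Equiv.mulLeft b) _ _ (fun _ => rfl)).symm
      _ = ∏ b' : B, (f b * MulAut.conjNormal (b : G) (f b')) := by simp_rw [hcoc]
      _ = _ := by
        rw [Finset.prod_mul_distrib, Finset.prod_const, Finset.card_univ, Nat.card_eq_fintype_card,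
          ht, map_prod]
  obtain ⟨s, hs⟩ := (powCoprime hco).surjective t
  have hs' : s ^ Nat.card B = t := hs
  refine ⟨s, s.2, fun b hb => ?_⟩
  have h7 : f ⟨b, hb⟩ = s * (MulAut.conjNormal b s)⁻¹ := by
    apply (powCoprime hco).injective
    rw [powCoprime_apply, powCoprime_apply, mul_pow, inv_pow, ← map_pow, hs']
    exact eq_mul_inv_of_mul_eq (hpow ⟨b, hb⟩).symm
  have h8 := hf ⟨b, hb⟩
  rw [h7] at h8
  convert h8 using 1
  push_cast
  rw [MulAut.conjNormal_apply]
  group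

end

theorem aux_compl {G : Type*} [Group G] [Finite G] (p n : ℕ) (hp : p.Prime) (hn : 1 ≤ n)
    (S A : Subgroup G) [S.Normal] [A.Normal] (hSA : S ≤ A)
    (hab : ∀ σ ∈ S, ∀ τ ∈ S, σ * τ = τ * σ)
    (hcard : Nat.card S = p ^ n)
    (hG : ∀ g h : G, g * h * g⁻¹ * h⁻¹ ∈ A)
    (hA : ∀ a ∈ A, a ^ (p ^ n - 1) ∈ S)
    (hsimple : ∀ H : Subgroup G, H ≤ S → H.Normal → H = ⊥ ∨ H = S)
    (hidx : n = 1 → Nat.Coprime p A.index) :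
    ∃ H : Subgroup G, S.IsComplement' H := by
  have : IsMulCommutative S := ⟨⟨fun a b => Subtype.ext (hab a a.2 b b.2)⟩⟩
  have := Fact.mk hp
  have hSbot : S ≠ ⊥ := by
    rintro rfl
    rw [Subgroup.card_bot] at hcard
    exact (Nat.one_lt_pow (by omega) hp.one_lt).ne hcard
  -- relative index is prime to p
  have hrel : ¬ p ∣ S.relIndex A := by
    intro hdvd
    have : p ∣ Nat.card (A ⧸ S.subgroupOf A) := hdvd
    obtain ⟨x, hx⟩ := exists_prime_orderOf_dvd_card' p this
    obtain ⟨a, rfl⟩ := QuotientGroup.mk_surjective x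
    have h1 : (QuotientGroup.mk a : A ⧸ S.subgroupOf A) ^ (p ^ n - 1) = 1 := by
      rw [← QuotientGroup.mk_pow, QuotientGroup.eq_one_iff, Subgroup.mem_subgroupOf]
      exact hA a a.2
    have h2 := orderOf_dvd_of_pow_eq_one h1
    rw [hx] at h2
    have h3 : p ∣ p ^ n := dvd_pow_self p (by omega)
    have h4 : 1 ≤ p ^ n := Nat.one_le_pow _ _ hp.pos
    have h5 : p ∣ 1 := by
      have := Nat.dvd_sub h3 h2
      rwa [Nat.sub_sub_self h4] at this
    exact hp.one_lt.ne' (Nat.dvd_one.mp h5)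
  have hcop : Nat.Coprime (Nat.card S) (S.relIndex A) := by
    rw [hcard]
    exact Nat.Coprime.pow_left _ ((Nat.Prime.coprime_iff_not_dvd hp).mpr hrel)
  -- complement in A
  obtain ⟨B, hBA, hSB, hSBA, hBcard⟩ : ∃ B : Subgroup G, B ≤ A ∧ (∀ x ∈ S, x ∈ B → x = 1) ∧
      (∀ a ∈ A, ∃ s ∈ S, s * a ∈ B) ∧ Nat.Coprime (Nat.card S) (Nat.card B) := by
    have hcS : Nat.card (S.subgroupOf A) = Nat.card S :=
      Nat.card_congr (Subgroup.subgroupOfEquivOfLe hSA).toEquiv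
    obtain ⟨B0, hB0⟩ := Subgroup.exists_right_complement'_of_coprime (N := S.subgroupOf A)
      (by rw [hcS]; exact hcop)
    refine ⟨B0.map A.subtype, Subgroup.map_subtype_le _, ?_, ?_, ?_⟩
    · rintro x hxS ⟨y, hy, rfl⟩
      have := (Subgroup.disjoint_def.mp hB0.disjoint) (Subgroup.mem_subgroupOf.mpr hxS) hy
      rw [this]; simp
    · intro a ha
      obtain ⟨⟨s, b⟩, h⟩ := hB0.2 ⟨a, ha⟩
      refine ⟨((s : A) : G)⁻¹, S.inv_mem (Subgroup.mem_subgroupOf.mp s.2), ?_⟩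
      refine ⟨b, b.2, ?_⟩
      have h' : ((s : A) : G) * ((b : A) : G) = a := congrArg Subtype.val h
      rw [← h']; simp
    · have e1 : Nat.card (B0.map A.subtype) = Nat.card B0 :=
        Subgroup.card_map_of_injective A.subtype_injective
      have e2 := hB0.symm.index_eq_card
      rw [e1, ← e2]; exact hcop
  have hconj : ∀ g : G, ∃ s ∈ S, ∀ b ∈ B, s * (g * b * g⁻¹) * s⁻¹ ∈ B := by
    intro g
    obtain ⟨s, hs, h⟩ := aux_conj S (B.map (MulAut.conj g).toMonoidHom) B
      (by rw [Subgroup.card_map_of_injective (MulAut.conj g).injective]; exact hBcard) hSB (by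
        rintro _ ⟨b, hb, rfl⟩
        exact hSBA _ (Subgroup.Normal.conj_mem ‹_› b (hBA hb) g))
    exact ⟨s, hs, fun b hb => h _ ⟨b, hb, rfl⟩⟩
  have hfinish : ∀ H : Subgroup G, (∀ s ∈ S, s ∈ H → s = 1) → (∀ g, ∃ s ∈ S, s * g ∈ H) →
      S.IsComplement' H := by
    intro H h1 h2
    refine Subgroup.isComplement'_of_disjoint_and_mul_eq_univ
      (Subgroup.disjoint_def.mpr (fun {x} => h1 x)) ?_
    refine Set.eq_univ_of_forall fun g => ?_
    obtain ⟨s, hs, h⟩ := h2 g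
    exact ⟨s⁻¹, S.inv_mem hs, s * g, h, by simp⟩
  have hZn : (S ⊓ Subgroup.centralizer (A : Set G)).Normal := inferInstance
  rcases hsimple _ inf_le_left hZn with hZ | hZ
  · refine ⟨Subgroup.normalizer (B : Set G), hfinish _ ?_ ?_⟩
    · intro s hs hsB
      have hsb : ∀ b ∈ B, b * s = s * b := by
        intro b hb
        have h1 : s * b * s⁻¹ ∈ B := (Subgroup.mem_normalizer_iff.mp hsB b).mp hb
        have h2 : s * b * s⁻¹ * b⁻¹ = 1 := by
          apply hSB _ _ (B.mul_mem h1 (B.inv_mem hb))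
          have := S.mul_mem hs (Subgroup.Normal.conj_mem ‹_› _ (S.inv_mem hs) b)
          convert this using 1; group
        have h3 := mul_inv_eq_one.mp h2
        exact (mul_inv_eq_iff_eq_mul.mp h3).symm
      have : s ∈ S ⊓ Subgroup.centralizer (A : Set G) := by
        refine ⟨hs, Subgroup.mem_centralizer_iff.mpr fun a ha => ?_⟩
        obtain ⟨t, ht, hta⟩ := hSBA a ha
        have h1 := hsb _ hta
        have h2 := hab s hs t ht
        have h3 : t * (a * s) = t * (s * a) := by
          rw [← mul_assoc, h1, ← mul_assoc, ← mul_assoc, h2]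
        exact mul_left_cancel h3
      rw [hZ] at this
      exact Subgroup.mem_bot.mp this
    · intro g
      obtain ⟨s, hs, h⟩ := hconj g
      refine ⟨s, hs, ?_⟩
      apply Subgroup.mem_normalizer_fintype
      intro b hb
      have h1 : s * (g * b * g⁻¹) * s⁻¹ ∈ B := h b hb
      have e : s * g * b * (s * g)⁻¹ = s * (g * b * g⁻¹) * s⁻¹ := by group
      rw [e]; exact h1
  · have hSc : ∀ s ∈ S, ∀ a ∈ A, a * s = s * a := by
      intro s hs a ha
      rw [← hZ] at hs
      exact Subgroup.mem_centralizer_iff.mp hs.2 a ha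
    have hBn : B.Normal := by
      refine ⟨fun b hb g => ?_⟩
      obtain ⟨s, hs, h⟩ := hconj g
      have h1 := h b hb
      rwa [← hSc s hs _ (Subgroup.Normal.conj_mem ‹_› b (hBA hb) g), mul_inv_cancel_right] at h1
    by_cases hz : ∃ z : G, ∃ s ∈ S, z * s ≠ s * z
    · obtain ⟨z, s₀, hs₀, hzs⟩ := hz
      have hCn : (S ⊓ Subgroup.centralizer {z}).Normal := by
        refine ⟨?_⟩
        rintro s ⟨hs, hsz⟩ g
        have hgs := Subgroup.Normal.conj_mem (inferInstance : S.Normal) s hs g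
        refine ⟨hgs, ?_⟩
        replace hsz : s * z = z * s := Subgroup.mem_centralizer_singleton_iff.mp hsz
        refine Subgroup.mem_centralizer_singleton_iff.mpr ?_
        -- z = (z g z⁻¹ g⁻¹)-twist
        have ha := hG g⁻¹ z
        have hc := hSc s hs _ ha
        -- (g⁻¹ z g z⁻¹) commutes with s, and s commutes with z
        have h3 : s * (g⁻¹ * z * g) = (g⁻¹ * z * g) * s := by
          have e : g⁻¹ * z * g = (g⁻¹ * z * g⁻¹⁻¹ * z⁻¹) * z := by group
          rw [e, ← mul_assoc, ← hc, mul_assoc _ s z, hsz, ← mul_assoc]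
        calc g * s * g⁻¹ * z = g * (s * (g⁻¹ * z * g)) * g⁻¹ := by group
          _ = z * (g * s * g⁻¹) := by rw [h3]; group
      have hC : S ⊓ Subgroup.centralizer {z} = ⊥ := by
        rcases hsimple _ inf_le_left hCn with h | h
        · exact h
        · exfalso
          rw [← h] at hs₀
          exact hzs (Subgroup.mem_centralizer_singleton_iff.mp hs₀.2).symm
      let N : Subgroup G := (Subgroup.centralizer {(QuotientGroup.mk' B z)}).comap
        (QuotientGroup.mk' B)
      have hN : ∀ g, g ∈ N ↔ g * z * g⁻¹ * z⁻¹ ∈ B := by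
        intro g
        rw [Subgroup.mem_comap, Subgroup.mem_centralizer_singleton_iff,
          ← QuotientGroup.eq_one_iff (N := B)]
        change (QuotientGroup.mk' B g) * _ = _ ↔ (QuotientGroup.mk' B _) = 1
        rw [map_mul, map_mul, map_mul, map_inv, map_inv, mul_inv_eq_one, mul_inv_eq_iff_eq_mul]
      have hcm : ∀ s ∈ S, s * (z * s⁻¹ * z⁻¹) ∈ S := fun s hs =>
        S.mul_mem hs (Subgroup.Normal.conj_mem ‹_› _ (S.inv_mem hs) z)
      have hfix : ∀ s ∈ S, s * (z * s⁻¹ * z⁻¹) = 1 → s = 1 := by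
        intro s hs h
        have : s ∈ S ⊓ Subgroup.centralizer {z} := by
          refine ⟨hs, Subgroup.mem_centralizer_singleton_iff.mpr ?_⟩
          have h' : s * z * s⁻¹ * z⁻¹ = 1 := by rw [← h]; group
          exact mul_inv_eq_iff_eq_mul.mp (mul_inv_eq_one.mp h')
        rw [hC] at this
        exact Subgroup.mem_bot.mp this
      refine ⟨N, hfinish N ?_ ?_⟩
      · intro s hs hsN
        apply hfix s hs
        apply hSB _ (hcm s hs)
        have := (hN s).mp hsN
        convert this using 1; group
      · intro g
        obtain ⟨t, ht, htB⟩ := hSBA _ (hG g z)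
        let φ : S → S := fun s => ⟨s * (z * (s : G)⁻¹ * z⁻¹), hcm s s.2⟩
        have hφ : Function.Injective φ := by
          intro s u hsu
          have h0 : (s : G) * (z * (s : G)⁻¹ * z⁻¹) = u * (z * (u : G)⁻¹ * z⁻¹) :=
            congrArg Subtype.val hsu
          have h1 : ((u⁻¹ * s : S) : G) = 1 := by
            apply hfix _ (u⁻¹ * s).2
            have hc := hab (z * (u : G) * z⁻¹) (Subgroup.Normal.conj_mem ‹_› _ u.2 z)
              (z * (s : G)⁻¹ * z⁻¹) (Subgroup.Normal.conj_mem ‹_› _ (S.inv_mem s.2) z)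
            push_cast
            calc (u : G)⁻¹ * s * (z * ((u : G)⁻¹ * s)⁻¹ * z⁻¹)
                = (u : G)⁻¹ * s * ((z * (s : G)⁻¹ * z⁻¹) * (z * u * z⁻¹)) := by group
              _ = (u : G)⁻¹ * (s * (z * (s : G)⁻¹ * z⁻¹)) * (z * u * z⁻¹) := by group
              _ = 1 := by rw [h0]; group
          have h2 : u⁻¹ * s = 1 := Subtype.ext h1
          exact (inv_mul_eq_one.mp h2).symm
        obtain ⟨s, hs⟩ := (Finite.injective_iff_surjective.mp hφ) ⟨t, ht⟩
        have hs' : (s : G) * (z * (s : G)⁻¹ * z⁻¹) = t := congrArg Subtype.val hs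
        refine ⟨s, s.2, (hN _).mpr ?_⟩
        have hc := hSc _ (Subgroup.Normal.conj_mem (inferInstance : S.Normal) _ (S.inv_mem s.2) z)
          _ (hG g z)
        have : (s : G) * g * z * (s * g)⁻¹ * z⁻¹ = t * (g * z * g⁻¹ * z⁻¹) := by
          calc (s : G) * g * z * (s * g)⁻¹ * z⁻¹
              = s * ((g * z * g⁻¹ * z⁻¹) * (z * (s : G)⁻¹ * z⁻¹)) := by group
            _ = t * (g * z * g⁻¹ * z⁻¹) := by rw [hc, ← hs']; group
        rw [this]; exact htB
    · push Not at hz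
      -- S is central, hence of order p
      have hn1 : n = 1 := by
        obtain ⟨x, hx⟩ := exists_prime_orderOf_dvd_card' (G := S) p
          (by rw [hcard]; exact dvd_pow_self p (by omega))
        have hle : Subgroup.zpowers (x : G) ≤ S := by
          rw [Subgroup.zpowers_le]; exact x.2
        have hnorm : (Subgroup.zpowers (x : G)).Normal := by
          refine ⟨fun y hy g => ?_⟩
          rw [hz g y (hle hy), mul_inv_cancel_right]
          exact hy
        have hxo : orderOf (x : G) = p := by rw [Subgroup.orderOf_coe, hx]
        rcases hsimple _ hle hnorm with h | h
        · rw [Subgroup.zpowers_eq_bot] at h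
          rw [h, orderOf_one] at hxo
          exact absurd hxo hp.one_lt.ne
        · rw [← h, Nat.card_zpowers, hxo] at hcard
          exact (Nat.pow_right_injective hp.two_le (by simpa using hcard)).symm
      apply Subgroup.exists_right_complement'_of_coprime
      rw [← Subgroup.relIndex_mul_index hSA]
      refine Nat.Coprime.mul_right hcop ?_
      rw [hcard]
      exact Nat.Coprime.pow_left _ (hidx hn1)

open IntermediateField in
theorem aux_fix {K M : Type*} [Field K] [Field M] [Algebra K M] (T : Set M) (σ : M ≃ₐ[K] M)
    (h : ∀ x ∈ T, σ x = x) : σ ∈ (adjoin K T).fixingSubgroup := by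
  rw [IntermediateField.mem_fixingSubgroup_iff]
  intro x hx
  induction hx using adjoin_induction with
  | mem x hx => exact h x hx
  | algebraMap x => exact σ.commutes x
  | add x y _ _ hx hy => rw [map_add, hx, hy]
  | inv x _ hx => rw [map_inv₀, hx]
  | mul x y _ _ hx hy => rw [map_mul, hx, hy]

open IntermediateField in
theorem aux_stab {K M : Type*} [Field K] [Field M] [Algebra K M] (T : Set M)
    (L : IntermediateField K M) (σ : M ≃ₐ[K] M)
    (h : ∀ x ∈ T, σ x ∈ L) : ∀ x ∈ adjoin K T, σ x ∈ L := by
  intro x hx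
  induction hx using adjoin_induction with
  | mem x hx => exact h x hx
  | algebraMap x => rw [σ.commutes x]; exact L.algebraMap_mem x
  | add x y _ _ hx hy => rw [map_add]; exact L.add_mem hx hy
  | inv x _ hx => rw [map_inv₀]; exact L.inv_mem hx
  | mul x y _ _ hx hy => rw [map_mul]; exact L.mul_mem hx hy

open IntermediateField in
theorem aux_field {K M : Type*} [Field K] [Field M] [Algebra K M] [FiniteDimensional K M]
    [IsGalois K M] (p n : ℕ) (hp : p.Prime) (hn : 1 ≤ n) (ζ : M)
    (hζ : IsPrimitiveRoot ζ (p ^ n - 1)) (Kn Ln : IntermediateField K M)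
    (hKn : Kn = adjoin K {ζ}) (hLn : Ln = Kn ⊔ adjoin K {x : M | x ^ (p ^ n - 1) ∈ Kn})
    (S : Subgroup (M ≃ₐ[K] M)) (hS : S = Ln.fixingSubgroup)
    (hcard : Nat.card S = p ^ n)
    (hab : ∀ σ ∈ S, ∀ τ ∈ S, σ * τ = τ * σ)
    (hsimple : ∀ H : Subgroup (M ≃ₐ[K] M), H ≤ S → H.Normal → H = ⊥ ∨ H = S) :
    ∃ E : IntermediateField K M, Module.finrank K E = p ^ n ∧
      (∀ F : IntermediateField K M, F ≤ E → F = ⊥ ∨ F = E) ∧ E ⊔ Ln = ⊤ := by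
  set e := p ^ n - 1 with he
  have hepos : 0 < e := by
    have := Nat.one_lt_pow (n := n) (by omega) hp.one_lt
    omega
  have : NeZero e := ⟨hepos.ne'⟩
  have hζKn : ζ ∈ Kn := by rw [hKn]; exact mem_adjoin_simple_self K ζ
  have hroot : ∀ ξ : M, ξ ^ e = 1 → ∃ i : ℕ, ζ ^ i = ξ := fun ξ hξ => by
    obtain ⟨i, -, h⟩ := hζ.eq_pow_of_pow_eq_one hξ
    exact ⟨i, h⟩
  have hrootKn : ∀ ξ : M, ξ ^ e = 1 → ξ ∈ Kn := fun ξ hξ => by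
    obtain ⟨i, rfl⟩ := hroot ξ hξ
    exact pow_mem hζKn i
  have hσroot : ∀ (σ : M ≃ₐ[K] M) (ξ : M), ξ ^ e = 1 → (σ ξ) ^ e = 1 := fun σ ξ h => by
    rw [← map_pow, h, map_one]
  have hKLn : Kn ≤ Ln := by rw [hLn]; exact le_sup_left
  have hxLn : ∀ x : M, x ^ e ∈ Kn → x ∈ Ln := fun x hx => by
    rw [hLn]
    exact (le_sup_right : _ ≤ Kn ⊔ _) (subset_adjoin K _ hx)
  have hLn' : Ln = adjoin K ({ζ} ∪ {x : M | x ^ e ∈ Kn}) := by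
    rw [adjoin_union, ← hKn]; exact hLn
  have hKst : ∀ σ : M ≃ₐ[K] M, ∀ x ∈ Kn, σ x ∈ Kn := by
    intro σ x hx
    rw [hKn] at hx
    refine aux_stab {ζ} Kn σ ?_ x hx
    rintro _ rfl
    exact hrootKn _ (hσroot σ _ hζ.pow_eq_one)
  have hLst : ∀ σ : M ≃ₐ[K] M, ∀ x ∈ Ln, σ x ∈ Ln := by
    intro σ x hx
    rw [hLn'] at hx
    refine aux_stab _ Ln σ ?_ x hx
    rintro y (rfl | hy)
    · exact hKLn (hKst σ _ hζKn)
    · apply hxLn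
      rw [← map_pow]
      exact hKst σ _ hy
  have hSn : S.Normal := by
    refine ⟨fun s hs g => ?_⟩
    rw [hS, IntermediateField.mem_fixingSubgroup_iff] at hs ⊢
    intro x hx
    have h1 := hs _ (hLst g⁻¹ x hx)
    rw [AlgEquiv.mul_apply, AlgEquiv.mul_apply, h1, ← AlgEquiv.mul_apply, mul_inv_cancel,
      AlgEquiv.one_apply]
  have hcomm : ∀ g h : M ≃ₐ[K] M, g * h * g⁻¹ * h⁻¹ ∈ Kn.fixingSubgroup := by
    intro g h
    rw [hKn]
    apply aux_fix
    intro y hy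
    rw [Set.mem_singleton_iff.mp hy]
    have key : ∀ ξ : M, ξ ^ e = 1 → g (h ξ) = h (g ξ) := by
      intro ξ hξ
      obtain ⟨k, rfl⟩ := hroot ξ hξ
      obtain ⟨i, hi⟩ := hroot (g ζ) (hσroot g _ hζ.pow_eq_one)
      obtain ⟨j, hj⟩ := hroot (h ζ) (hσroot h _ hζ.pow_eq_one)
      simp only [map_pow, ← hi, ← hj]
      congr 1
      rw [← pow_mul, ← pow_mul, mul_comm]
    have h1 := key (g⁻¹ (h⁻¹ ζ)) (hσroot _ _ (hσroot _ _ hζ.pow_eq_one))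
    rw [AlgEquiv.mul_apply, AlgEquiv.mul_apply, AlgEquiv.mul_apply, h1, ← AlgEquiv.mul_apply g,
      mul_inv_cancel, AlgEquiv.one_apply, ← AlgEquiv.mul_apply, mul_inv_cancel, AlgEquiv.one_apply]
  have hAn : Kn.fixingSubgroup.Normal := by
    refine ⟨fun a ha g => ?_⟩
    have := mul_mem (hcomm g a) ha
    rwa [inv_mul_cancel_right] at this
  have hSA : S ≤ Kn.fixingSubgroup := by rw [hS]; exact fixingSubgroup_le hKLn
  have hAe : ∀ a ∈ Kn.fixingSubgroup, a ^ e ∈ S := by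
    intro a ha
    rw [hS, hLn']
    apply aux_fix
    rintro x (rfl | hx)
    · exact (IntermediateField.mem_fixingSubgroup_iff Kn _).mp (pow_mem ha e) _ hζKn
    · by_cases hx0 : x = 0
      · rw [hx0, map_zero]
      have ha' := (IntermediateField.mem_fixingSubgroup_iff Kn _).mp ha
      have hω : (a x / x) ^ e = 1 := by
        rw [div_pow, ← map_pow, ha' _ hx, div_self (pow_ne_zero _ hx0)]
      have hk : ∀ k : ℕ, (a ^ k) x = (a x / x) ^ k * x := by
        intro k
        induction k with
        | zero => simp
        | succ k ih =>
          rw [pow_succ', AlgEquiv.mul_apply, ih, map_mul, map_pow, ha' _ (hrootKn _ hω), pow_succ]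
          field_simp
      rw [hk, hω, one_mul]
  have hidx : n = 1 → Nat.Coprime p Kn.fixingSubgroup.index := by
    intro hn1
    have hi : Kn.fixingSubgroup.index = (minpoly K ζ).natDegree := by
      rw [← finrank_eq_fixingSubgroup_index, hKn, adjoin.finrank (IsGalois.integral K ζ)]
    have hdeg : (minpoly K ζ).natDegree ≤ e := by
      have hmonic := Polynomial.monic_X_pow_sub_C (1 : K) hepos.ne'
      have := Polynomial.natDegree_le_of_dvd
        (minpoly.dvd K ζ (p := Polynomial.X ^ e - Polynomial.C 1) (by simp [hζ.pow_eq_one]))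
        hmonic.ne_zero
      rwa [Polynomial.natDegree_X_pow_sub_C] at this
    have hpos := minpoly.natDegree_pos (IsGalois.integral K ζ)
    rw [hi]
    refine (Nat.Prime.coprime_iff_not_dvd hp).mpr fun hd => ?_
    have h1 := Nat.le_of_dvd hpos hd
    have h2 := hp.pos
    rw [hn1, pow_one] at he
    omega
  obtain ⟨H, hH⟩ := aux_compl p n hp hn S Kn.fixingSubgroup hSA hab hcard hcomm hAe hsimple hidx
  have hprod : ∀ g, ∃ s ∈ S, ∃ h ∈ H, s * h = g := fun g => by
    obtain ⟨⟨s, h⟩, e⟩ := hH.2 g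
    exact ⟨s, s.2, h, h.2, e⟩
  refine ⟨fixedField H, ?_, ?_, ?_⟩
  · rw [finrank_eq_fixingSubgroup_index, fixingSubgroup_fixedField, hH.index_eq_card, hcard]
  · intro F hF
    have hHJ : H ≤ F.fixingSubgroup := (le_iff_le H F).mp hF
    have hJn : (F.fixingSubgroup ⊓ S).Normal := by
      refine ⟨?_⟩
      rintro x ⟨hxJ, hxS⟩ g
      refine ⟨?_, hSn.conj_mem x hxS g⟩
      obtain ⟨s, hs, h, hh, rfl⟩ := hprod g
      have h1 : h * x * h⁻¹ ∈ F.fixingSubgroup :=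
        mul_mem (mul_mem (hHJ hh) hxJ) (inv_mem (hHJ hh))
      have h2 : s * h * x * (s * h)⁻¹ = h * x * h⁻¹ := by
        have := hab s hs _ (hSn.conj_mem x hxS h)
        calc s * h * x * (s * h)⁻¹ = (s * (h * x * h⁻¹)) * s⁻¹ := by group
          _ = _ := by rw [this, mul_inv_cancel_right]
      rw [h2]; exact h1
    rw [← IsGalois.fixedField_fixingSubgroup F]
    rcases hsimple _ inf_le_right hJn with h | h
    · right
      congr 1
      refine le_antisymm (fun j hj => ?_) hHJ
      obtain ⟨s, hs, h', hh, rfl⟩ := hprod j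
      have hsJ : s ∈ F.fixingSubgroup := by
        have := mul_mem hj (inv_mem (hHJ hh))
        rwa [mul_inv_cancel_right] at this
      have : s ∈ F.fixingSubgroup ⊓ S := ⟨hsJ, hs⟩
      rw [h, Subgroup.mem_bot] at this
      rw [this, one_mul]; exact hh
    · left
      have hSJ : S ≤ F.fixingSubgroup := inf_eq_right.mp h
      have : F.fixingSubgroup = ⊤ := by
        rw [eq_top_iff]
        rintro g -
        obtain ⟨s, hs, h', hh, rfl⟩ := hprod g
        exact mul_mem (hSJ hs) (hHJ hh)
      rw [this, IsGalois.fixedField_top]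
  · rw [← IsGalois.fixedField_fixingSubgroup (fixedField H ⊔ Ln), fixingSubgroup_sup,
      fixingSubgroup_fixedField, ← hS, hH.symm.disjoint.eq_bot, fixedField_bot]

/-- Converse direction: if `M` is a finite Galois extension of `K` containing `L_n` such
that `Gal(M / L_n)` (the subgroup `S` of `Gal(M / K)` fixing `L_n` pointwise) is abelian
of order `p ^ n` with every element of order dividing `p`, and the only subgroups of
`Gal(M / L_n)` normal in `Gal(M / K)` are trivial and `Gal(M / L_n)` itself, then there is
a primitive extension `E` of `K` of degree `p ^ n` with `E ⬝ L_n = M`. -/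
theorem stmt_12 (p : ℕ) [hp : Fact p.Prime] (n : ℕ) (hn : 1 ≤ n)
    (Ω : Type) [Field Ω] [Algebra ℚ_[p] Ω] [IsAlgClosure ℚ_[p] Ω]
    (K : IntermediateField ℚ_[p] Ω) [FiniteDimensional ℚ_[p] ↥K]
    (ζ : Ω) (hζ : IsPrimitiveRoot ζ (p ^ n - 1))
    (Kn : IntermediateField ↥K Ω) (hKn : Kn = IntermediateField.adjoin ↥K {ζ})
    (Ln : IntermediateField ↥K Ω)
    (hLn : Ln = Kn ⊔ IntermediateField.adjoin ↥K {x : Ω | x ^ (p ^ n - 1) ∈ Kn})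
    (M : IntermediateField ↥K Ω) (hLnM : Ln ≤ M)
    [FiniteDimensional ↥K ↥M] [IsGalois ↥K ↥M]
    (S : Subgroup (↥M ≃ₐ[↥K] ↥M))
    (hS : S = fixingSubgroup (↥M ≃ₐ[↥K] ↥M) {x : ↥M | (x : Ω) ∈ Ln})
    (hcard : Nat.card S = p ^ n)
    (hab : ∀ σ ∈ S, ∀ τ ∈ S, σ * τ = τ * σ) (hexp : ∀ σ ∈ S, σ ^ p = 1)
    (hsimple : ∀ H : Subgroup (↥M ≃ₐ[↥K] ↥M), H ≤ S → H.Normal → H = ⊥ ∨ H = S) :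
    ∃ E : IntermediateField ↥K Ω, Module.finrank ↥K ↥E = p ^ n ∧
      (∀ F : IntermediateField ↥K Ω, F ≤ E → F = ⊥ ∨ F = E) ∧ E ⊔ Ln = M := by
  classical
  have hKL : Kn ≤ Ln := by rw [hLn]; exact le_sup_left
  have hKM : Kn ≤ M := hKL.trans hLnM
  have hζK : ζ ∈ Kn := by rw [hKn]; exact IntermediateField.mem_adjoin_simple_self _ ζ
  have hxM : ∀ x : Ω, x ^ (p ^ n - 1) ∈ Kn → x ∈ M := fun x hx => by
    apply hLnM
    rw [hLn]
    exact (le_sup_right : _ ≤ Kn ⊔ _) (IntermediateField.subset_adjoin _ _ hx)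
  have hinj : Function.Injective (IntermediateField.map M.val) :=
    IntermediateField.map_injective M.val
  have hmapr : ∀ (F : IntermediateField ↥K Ω) (h : F ≤ M),
      (IntermediateField.restrict h).map M.val = F := fun F h =>
    IntermediateField.lift_restrict h
  obtain ⟨E, hE1, hE2, hE3⟩ := aux_field (K := ↥K) (M := ↥M) p n hp.out hn ⟨ζ, hKM hζK⟩
    (IsPrimitiveRoot.of_map_of_injective (f := M.val) hζ M.val.injective)
    (IntermediateField.restrict hKM) (IntermediateField.restrict hLnM)
    (by
      apply hinj
      rw [hmapr, IntermediateField.adjoin_map, hKn]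
      simp)
    (by
      apply hinj
      rw [hmapr, IntermediateField.map_sup, hmapr, IntermediateField.adjoin_map, hLn]
      congr 2
      ext x
      constructor
      · intro hx
        exact ⟨⟨x, hxM x hx⟩, (IntermediateField.mem_restrict hKM _).mpr hx, rfl⟩
      · rintro ⟨y, hy, rfl⟩
        exact (IntermediateField.mem_restrict hKM _).mp hy)
    S (by
      rw [hS]
      ext σ
      rw [IntermediateField.mem_fixingSubgroup_iff, mem_fixingSubgroup_iff]
      simp only [IntermediateField.mem_restrict]
      rfl) hcard hab hsimple
  refine ⟨E.map M.val, ?_, ?_, ?_⟩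
  · rw [← hE1]
    exact (IntermediateField.equivMap E M.val).toLinearEquiv.finrank_eq.symm
  · intro F hF
    have hFM : F ≤ M := hF.trans (IntermediateField.lift_le E)
    have hF' : IntermediateField.restrict hFM ≤ E := by
      intro x hx
      obtain ⟨y, hy, hyx⟩ := hF (show (x : Ω) ∈ F from (IntermediateField.mem_restrict hFM x).mp hx)
      have : y = x := Subtype.ext hyx
      rwa [← this]
    rcases hE2 _ hF' with h | h
    · left
      rw [← hmapr F hFM, h, IntermediateField.map_bot]
    · right
      rw [← hmapr F hFM, h]
  · have := congrArg (IntermediateField.map M.val) hE3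
    rw [IntermediateField.map_sup, hmapr] at this
    rw [this]
    exact IntermediateField.lift_top _ M
end

section
/- Fix a prime p and an integer n ≥ 1, set e_n = p^n − 1, and fix an algebraic closure Ω of ℚ_p. Let K ⊆ Ω be a finite extension of ℚ_p, let K_n = K(ζ) where ζ ∈ Ω is a primitive e_n-th root of unity, and let L_n ⊆ Ω be the field generated over K_n by all x ∈ Ω with x^{e_n} ∈ K_n. If E and E' are two primitive extensions of K inside Ω, each of degree p^n over K, satisfying E·L_n = E'·L_n, then E and E' are isomorphic as K-algebras. -/
lemma compl_eq {G : Type*} [Group G] (Λ A N : Subgroup G) [Λ.Normal] (h : Λ ⊔ A = ⊤)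
    (hAN : A ≤ N) (hN : Λ ⊓ N = ⊥) : N = A := by
  refine le_antisymm (fun x hx => ?_) hAN
  have hx' : x ∈ Λ ⊔ A := by rw [h]; trivial
  obtain ⟨y, hy, z, hz, rfl⟩ := Subgroup.mem_sup_of_normal_left.1 hx'
  have : y ∈ Λ ⊓ N := ⟨hy, by simpa using N.mul_mem hx (N.inv_mem (hAN hz))⟩
  rw [hN, Subgroup.mem_bot] at this
  simpa [this] using hz

lemma B2_case1 {G : Type*} [Group G] [Finite G] (p n : ℕ) [hp : Fact p.Prime] (hn : 1 ≤ n)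
    (Λ C S S' : Subgroup G) [Λ.Normal] [C.Normal]
    (hab : ∀ a ∈ Λ, ∀ b ∈ Λ, a * b = b * a)
    (h1 : Λ ⊓ S = ⊥)
    (h1' : Λ ⊓ S' = ⊥) (h2' : Λ ⊔ S' = ⊤)
    (hcard : Nat.card Λ = p ^ n) (hΛC : Λ ≤ C)
    (hC2 : ∀ c ∈ C, c ^ (p ^ n - 1) ∈ Λ) :
    ∃ l ∈ Λ, ∀ q ∈ S ⊓ C, l * q * l⁻¹ ∈ S' := by
  classical
  let : CommGroup Λ := { (inferInstance : Group Λ) with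
    mul_comm := fun a b => Subtype.ext (hab a a.2 b b.2) }
  let Q := S ⊓ C
  let := Fintype.ofFinite Q
  have hex : ∀ q : Q, ∃ l : Λ, (l : G) * q ∈ S' := by
    intro q
    have hx' : (q : G)∈ Λ ⊔ S' := by rw [h2']; trivial
    obtain ⟨y, hy, z, hz, hyz⟩ := Subgroup.mem_sup_of_normal_left.1 hx'
    refine ⟨⟨y, hy⟩⁻¹, ?_⟩
    rw [← hyz]; simpa using hz
  choose f hf using hex
  have huniq : ∀ (q : G) (a b : Λ), (a : G) * q ∈ S' → (b : G) * q ∈ S' → a = b := by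
    intro q a b ha hb
    have : ((a * b⁻¹ : Λ) : G) ∈ Λ ⊓ S' := by
      refine ⟨(a * b⁻¹).2, ?_⟩
      have := S'.mul_mem ha (S'.inv_mem hb)
      simpa [mul_assoc] using this
    rw [h1', Subgroup.mem_bot] at this
    have h3 : a * b⁻¹ = 1 := Subtype.ext this
    exact mul_inv_eq_one.1 h3
  have hcoc : ∀ q r : Q, f (q * r) = f q * MulAut.conjNormal (q : G) (f r) := by
    intro q r
    apply huniq (q * r)
    · exact hf (q * r)
    · have := S'.mul_mem (hf q) (hf r)
      simpa [MulAut.conjNormal_apply, mul_assoc] using this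
  have hmcop : (Nat.card Λ).Coprime (Nat.card Q) := by
    rw [hcard]
    apply Nat.Coprime.pow_left
    rw [Nat.Prime.coprime_iff_not_dvd hp.out]
    intro hdvd
    obtain ⟨x, hx⟩ := exists_prime_orderOf_dvd_card' p hdvd
    have hx1 : x ^ (p ^ n - 1) = 1 := by
      have h3 : ((x : G)) ^ (p ^ n - 1) ∈ Λ ⊓ S := ⟨hC2 x x.2.2, S.pow_mem x.2.1 _⟩
      rw [h1, Subgroup.mem_bot] at h3
      exact Subtype.ext (by simpa using h3)
    have h4 : p ∣ p ^ n - 1 := (dvd_of_eq hx.symm).trans (orderOf_dvd_of_pow_eq_one hx1)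
    have h5 : p ∣ p ^ n := dvd_pow_self p (by omega)
    have h6 : 1 ≤ p ^ n := Nat.one_le_pow _ _ hp.out.pos
    have h7 : p ∣ 1 := by
      have := Nat.dvd_sub h5 h4
      rwa [Nat.sub_sub_self h6] at this
    exact hp.out.one_lt.ne' (Nat.dvd_one.1 h7)
  let F : Λ := ∏ r : Q, f r
  have hF : ∀ q : Q, F = f q ^ (Nat.card Q) * MulAut.conjNormal (q : G) F := by
    intro q
    calc F = ∏ r : Q, f (q * r) := (Equiv.prod_comp (Equiv.mulLeft q) f).symm
      _ = ∏ r : Q, f q * MulAut.conjNormal (q : G) (f r) := by simp only [hcoc]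
      _ = _ := by
        rw [Finset.prod_mul_distrib, Finset.prod_const, Finset.card_univ,
          ← Nat.card_eq_fintype_card, map_prod]
  let l : Λ := (powCoprime hmcop).symm F
  have hl : l ^ Nat.card Q = F := (powCoprime hmcop).apply_symm_apply F
  refine ⟨l, l.2, fun q hq => ?_⟩
  have h3 := hF ⟨q, hq⟩
  rw [← hl, map_pow, ← mul_pow] at h3
  have h4 : l = f ⟨q, hq⟩ * MulAut.conjNormal q l := (powCoprime hmcop).injective h3
  have h5 : (l : G) = f ⟨q, hq⟩ * (q * l * q⁻¹) := by
    have := congrArg (Subtype.val) h4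
    simpa [MulAut.conjNormal_apply] using this
  have h6 := hf ⟨q, hq⟩
  have : (l : G) * q * (l : G)⁻¹ = f ⟨q, hq⟩ * q := by
    rw [mul_inv_eq_iff_eq_mul]
    nth_rewrite 1 [h5]
    group
  rw [this]; exact h6

lemma B2 {G : Type*} [Group G] [Finite G] (p n : ℕ) [hp : Fact p.Prime] (hn : 1 ≤ n)
    (Λ C S S' : Subgroup G) [hΛn : Λ.Normal] [hCn : C.Normal]
    (hab : ∀ a ∈ Λ, ∀ b ∈ Λ, a * b = b * a) (hS : IsCoatom S)
    (h1 : Λ ⊓ S = ⊥) (h2 : Λ ⊔ S = ⊤)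
    (h1' : Λ ⊓ S' = ⊥) (h2' : Λ ⊔ S' = ⊤)
    (hcard : Nat.card Λ = p ^ n) (hΛC : Λ ≤ C)
    (hC1 : ∀ c ∈ C, ∀ d ∈ C, c * d * c⁻¹ * d⁻¹ ∈ Λ)
    (hC2 : ∀ c ∈ C, c ^ (p ^ n - 1) ∈ Λ)
    (hGC : ∀ g h : G, g * h * g⁻¹ * h⁻¹ ∈ C) (hn1 : n = 1 → C = ⊤) :
    ∃ g : G, ∀ x ∈ S, g * x * g⁻¹ ∈ S' := by
  have irr : ∀ X : Subgroup G, X ≤ Λ → X.Normal → X = ⊥ ∨ X = Λ := by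
    intro X hX hXn
    by_cases hXS : X ≤ S
    · left; rw [eq_bot_iff, ← h1]; exact le_inf hX hXS
    · right
      have hXS' : X ⊔ S = ⊤ := by
        rw [sup_comm]; exact hS.2 _ (left_lt_sup.2 hXS)
      refine le_antisymm hX fun x hx => ?_
      have hx' : x ∈ X ⊔ S := by rw [hXS']; trivial
      obtain ⟨y, hy, z, hz, rfl⟩ := Subgroup.mem_sup_of_normal_left.1 hx'
      have : z ∈ Λ ⊓ S := ⟨by simpa using Λ.mul_mem (Λ.inv_mem (hX hy)) hx, hz⟩
      rw [h1, Subgroup.mem_bot] at this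
      simpa [this] using hy
  -- reduce to conjugating complement
  have key : ∀ l : G, ∀ N : Subgroup G, Λ ⊓ N = ⊥ → S' ≤ N →
      (∀ x ∈ S, l * x * l⁻¹ ∈ N) → ∃ g : G, ∀ x ∈ S, g * x * g⁻¹ ∈ S' := by
    intro l N hN hS'N hSN
    have := compl_eq Λ S' N h2' hS'N hN
    subst this
    exact ⟨l, hSN⟩
  by_cases hcase : ∀ c ∈ C, ∀ a ∈ Λ, c * a = a * c
  · -- C centralizes Λ
    have hQ : ∀ T : Subgroup G, Λ ⊓ T = ⊥ → Λ ⊔ T = ⊤ → ∀ x, x ∈ T ⊓ C ↔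
        x ∈ C ∧ x ^ (p ^ n - 1) = 1 := by
      intro T hT hT2 x
      constructor
      · rintro ⟨hxT, hxC⟩
        refine ⟨hxC, ?_⟩
        have : x ^ (p ^ n - 1) ∈ Λ ⊓ T := ⟨hC2 x hxC, T.pow_mem hxT _⟩
        rwa [hT, Subgroup.mem_bot] at this
      · rintro ⟨hxC, hx⟩
        refine ⟨?_, hxC⟩
        have hx' : x ∈ Λ ⊔ T := by rw [hT2]; trivial
        obtain ⟨y, hy, z, hz, rfl⟩ := Subgroup.mem_sup_of_normal_left.1 hx'
        have hzC : z ∈ C := by simpa using C.mul_mem (C.inv_mem (hΛC hy)) hxC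
        have hz1 : z ^ (p ^ n - 1) = 1 := by
          have : z ^ (p ^ n - 1) ∈ Λ ⊓ T := ⟨hC2 z hzC, T.pow_mem hz _⟩
          rwa [hT, Subgroup.mem_bot] at this
        have hcom : Commute y z := (hcase z hzC y hy).symm
        rw [hcom.mul_pow, hz1, mul_one] at hx
        have hy1 : y ^ (p ^ n) = 1 := by
          have := pow_card_eq_one' (x := (⟨y, hy⟩ : Λ))
          rw [hcard] at this
          simpa using congrArg Subtype.val this
        have h6 : 1 ≤ p ^ n := Nat.one_le_pow _ _ hp.out.pos
        have hy2 : y = 1 := by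
          rw [← Nat.sub_add_cancel h6, pow_add, hx] at hy1
          simpa using hy1
        simpa [hy2] using hz
    have hQ' : ∀ x, x ∈ S ⊓ C ↔ x ∈ S' ⊓ C := fun x => by
      rw [hQ S h1 h2, hQ S' h1' h2']
    by_cases hn' : n = 1
    · refine ⟨1, fun x hx => ?_⟩
      have : x ∈ S' ⊓ C := (hQ' x).1 ⟨hx, by rw [hn1 hn']; trivial⟩
      simpa using this.1
    -- an element of S acting nontrivially
    have hs : ∃ s ∈ S, ∃ a ∈ Λ, s * a ≠ a * s := by
      by_contra! hcon
      -- everything central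
      have hcen : ∀ g : G, ∀ a ∈ Λ, g * a = a * g := by
        intro g a ha
        have hx' : g ∈ Λ ⊔ S := by rw [h2]; trivial
        obtain ⟨y, hy, z, hz, rfl⟩ := Subgroup.mem_sup_of_normal_left.1 hx'
        rw [mul_assoc, hcon z hz a ha, ← mul_assoc, hab y hy a ha, mul_assoc]
      have hpd : p ∣ Nat.card Λ := by rw [hcard]; exact dvd_pow_self p (by omega)
      obtain ⟨x, hx⟩ := exists_prime_orderOf_dvd_card' p hpd
      have hxo : orderOf (x : G) = p := by rw [Subgroup.orderOf_coe, hx]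
      have hnorm : (Subgroup.zpowers (x : G)).Normal := by
        constructor
        intro y hy g
        have : y ∈ Λ := (Subgroup.zpowers_le.2 x.2) hy
        rw [hcen g y this]; simpa using hy
      rcases irr _ (Subgroup.zpowers_le.2 x.2) hnorm with h | h
      · have := Nat.card_zpowers (x : G)
        rw [h, hxo] at this
        simp at this
        exact hp.out.one_lt.ne this
      · have := Nat.card_zpowers (x : G)
        rw [h, hxo, hcard] at this
        have h8 := Nat.pow_right_injective hp.out.two_le (a₁ := n) (a₂ := 1) (by simpa using this)
        exact hn' h8
    obtain ⟨s, hsS, a₀, ha₀, hsa⟩ := hs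
    have hfix : ∀ a ∈ Λ, s * a = a * s → a = 1 := by
      let X : Subgroup G := Λ ⊓ Subgroup.centralizer {s}
      have hX : X.Normal := by
        constructor
        rintro x ⟨hxΛ, hxs⟩ g
        refine ⟨hΛn.conj_mem x hxΛ g, ?_⟩
        rw [SetLike.mem_coe, Subgroup.mem_toSubmonoid, Subgroup.mem_centralizer_singleton_iff] at hxs ⊢
        -- s g = g s c
        have hc : g⁻¹ * s * g * s⁻¹ ∈ C := by simpa using hGC g⁻¹ s
        have h3 := hcase _ hc (x) hxΛ
        -- g⁻¹ s g = c s commutes with x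
        have h4 : (g⁻¹ * s * g) * x = x * (g⁻¹ * s * g) := by
          have e1 : g⁻¹ * s * g = (g⁻¹ * s * g * s⁻¹) * s := by group
          rw [e1, mul_assoc, ← hxs, ← mul_assoc, h3, mul_assoc]
        calc g * x * g⁻¹ * s = g * (x * (g⁻¹ * s * g)) * g⁻¹ := by group
          _ = g * ((g⁻¹ * s * g) * x) * g⁻¹ := by rw [h4]
          _ = s * (g * x * g⁻¹) := by group
      intro a ha has
      have haX : a ∈ X := ⟨ha, by
        rw [SetLike.mem_coe, Subgroup.mem_toSubmonoid, Subgroup.mem_centralizer_singleton_iff]; exact has.symm⟩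
      rcases irr X inf_le_left hX with h | h
      · rw [h, Subgroup.mem_bot] at haX; exact haX
      · exfalso
        have : a₀ ∈ X := h ▸ ha₀
        have := this.2
        rw [SetLike.mem_coe, Subgroup.mem_toSubmonoid, Subgroup.mem_centralizer_singleton_iff] at this
        exact hsa this.symm
    have hl : ∃ l ∈ Λ, l * s * l⁻¹ ∈ S' := by
      let φ : Λ → Λ := fun l => ⟨l * (s * (l : G)⁻¹ * s⁻¹),
        Λ.mul_mem l.2 (hΛn.conj_mem _ (Λ.inv_mem l.2) s)⟩
      have hφ : Function.Injective φ := by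
        intro a b h
        have h3 : (a : G) * (s * (a : G)⁻¹ * s⁻¹) = b * (s * (b : G)⁻¹ * s⁻¹) :=
          congrArg Subtype.val h
        have h4 : s * ((b : G)⁻¹ * a) = ((b : G)⁻¹ * a) * s := by
          have h5 : (a : G) * s * (a : G)⁻¹ = b * s * (b : G)⁻¹ := by
            have := congrArg (· * s) h3
            simpa [mul_assoc] using this
          calc s * ((b : G)⁻¹ * a) = (b : G)⁻¹ * (b * s * (b : G)⁻¹) * a := by group
            _ = (b : G)⁻¹ * (a * s * (a : G)⁻¹) * a := by rw [h5]
            _ = _ := by group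
        have h6 := hfix _ (Λ.mul_mem (Λ.inv_mem b.2) a.2) h4
        exact Subtype.ext (inv_mul_eq_one.1 h6).symm
      have hsurj := Finite.surjective_of_injective hφ
      have hx' : s ∈ Λ ⊔ S' := by rw [h2']; trivial
      obtain ⟨y, hy, z, hz, hyz⟩ := Subgroup.mem_sup_of_normal_left.1 hx'
      obtain ⟨l, hl⟩ := hsurj ⟨y⁻¹, Λ.inv_mem hy⟩
      refine ⟨l, l.2, ?_⟩
      have h3 : (l : G) * (s * (l : G)⁻¹ * s⁻¹) = y⁻¹ := congrArg Subtype.val hl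
      have : (l : G) * s * (l : G)⁻¹ = z := by
        have h4 := congrArg (· * s) h3

        rw [← hyz] at h4 ⊢
        simpa [mul_assoc] using h4
      rw [this]; exact hz
    obtain ⟨l, hlΛ, hl⟩ := hl
    set t := l * s * l⁻¹ with ht
    have hQn : ∀ g x, x ∈ S' ⊓ C → g * x * g⁻¹ ∈ S' ⊓ C := by
      intro g x hx
      rw [hQ S' h1' h2'] at hx ⊢
      refine ⟨hCn.conj_mem _ hx.1 g, ?_⟩
      rw [conj_pow, hx.2]; simp
    have hQnorm : (S' ⊓ C).Normal := ⟨fun x hx g => hQn g x hx⟩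
    -- N = { g | g t g⁻¹ t⁻¹ ∈ Q}
    let N : Subgroup G := (Subgroup.centralizer {(QuotientGroup.mk' (S' ⊓ C)) t}).comap
      (QuotientGroup.mk' (S' ⊓ C))
    have hNmem : ∀ g, g ∈ N ↔ g * t * g⁻¹ * t⁻¹ ∈ S' ⊓ C := by
      intro g
      rw [Subgroup.mem_comap, Subgroup.mem_centralizer_singleton_iff, ← QuotientGroup.eq_one_iff]
      constructor
      · intro h
        have : (QuotientGroup.mk' (S' ⊓ C)) (g * t * g⁻¹ * t⁻¹) = 1 := by
          simp only [map_mul, map_inv]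
          rw [h]; group
        exact this
      · intro h
        have h' : (QuotientGroup.mk' (S' ⊓ C)) (g * t * g⁻¹ * t⁻¹) = 1 := h
        simp only [map_mul, map_inv] at h'
        rw [mul_inv_eq_one, mul_inv_eq_iff_eq_mul] at h'
        exact h'
    refine key l N ?_ ?_ ?_
    · rw [eq_bot_iff]
      rintro x ⟨hxΛ, hxN⟩
      rw [SetLike.mem_coe, Subgroup.mem_toSubmonoid, hNmem] at hxN
      have h3 : x * t * x⁻¹ * t⁻¹ ∈ Λ ⊓ S' := by
        refine ⟨?_, hxN.1⟩
        have := Λ.mul_mem hxΛ (hΛn.conj_mem _ (Λ.inv_mem hxΛ) t)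
        simpa [mul_assoc] using this
      rw [h1', Subgroup.mem_bot] at h3
      have h4 : x * t = t * x := by
        rw [mul_inv_eq_one, mul_inv_eq_iff_eq_mul] at h3; exact h3
      have hcom : l⁻¹ * x * l = x := by
        rw [hab _ (Λ.inv_mem hlΛ) _ hxΛ]; simp
      have h5 : s * x = x * s := by
        have e : s = l⁻¹ * t * l := by rw [ht]; group
        have hx2 : l * x = x * l := hab _ hlΛ _ hxΛ
        have hx3 : l⁻¹ * x = x * l⁻¹ := hab _ (Λ.inv_mem hlΛ) _ hxΛ
        rw [e]
        calc l⁻¹ * t * l * x = l⁻¹ * t * (l * x) := by group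
          _ = l⁻¹ * (t * x) * l := by rw [hx2]; group
          _ = (l⁻¹ * x) * t * l := by rw [← h4]; group
          _ = _ := by rw [hx3]; group
      exact hfix x hxΛ h5
    · intro g hg
      rw [hNmem]
      exact ⟨S'.mul_mem (S'.mul_mem (S'.mul_mem hg hl) (S'.inv_mem hg)) (S'.inv_mem hl), hGC g t⟩
    · intro x hx
      rw [hNmem]
      have h3 : x * s * x⁻¹ * s⁻¹ ∈ S' ⊓ C := by
        rw [← hQ']
        exact ⟨S.mul_mem (S.mul_mem (S.mul_mem hx hsS) (S.inv_mem hx)) (S.inv_mem hsS), hGC x s⟩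
      have := hQn l _ h3
      convert this using 1
      rw [ht]; group
  · -- nontrivial action
    push Not at hcase
    obtain ⟨c₀, hc₀, a₀, ha₀, hne⟩ := hcase
    have hfix : ∀ a ∈ Λ, (∀ c ∈ C, c * a = a * c) → a = 1 := by
      let X : Subgroup G := Λ ⊓ Subgroup.centralizer (C : Set G)
      have hX : X.Normal := inferInstance
      intro a ha hac
      have haX : a ∈ X := ⟨ha, by
        rw [SetLike.mem_coe, Subgroup.mem_toSubmonoid, Subgroup.mem_centralizer_iff]; exact hac⟩
      rcases irr X inf_le_left hX with h | h
      · rw [h, Subgroup.mem_bot] at haX; exact haX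
      · exfalso
        have : a₀ ∈ X := h ▸ ha₀
        have := this.2
        rw [SetLike.mem_coe, Subgroup.mem_toSubmonoid, Subgroup.mem_centralizer_iff] at this
        exact hne (this c₀ hc₀)
    obtain ⟨l, hlΛ, hl⟩ := B2_case1 p n hn Λ C S S' hab h1 h1' h2' hcard hΛC hC2
    let N := Subgroup.normalizer ((S' ⊓ C : Subgroup G) : Set G)
    -- l (S ⊓ C) l⁻¹ = S' ⊓ C
    have hS'conj : ∀ x, x ∈ S' ⊓ C ↔ l⁻¹ * x * l ∈ S ⊓ C := by
      intro x
      constructor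
      · rintro ⟨hxS, hxC⟩
        have hy : l⁻¹ * x * l ∈ C := by simpa using hCn.conj_mem _ hxC l⁻¹
        have hx' : l⁻¹ * x * l ∈ Λ ⊔ S := by rw [h2]; trivial
        obtain ⟨y, hyΛ, z, hz, hyz⟩ := Subgroup.mem_sup_of_normal_left.1 hx'
        have hzC : z ∈ C := by
          have := C.mul_mem (C.inv_mem (hΛC hyΛ)) hy
          rw [← hyz] at this; simpa using this
        have h3 := hl z ⟨hz, hzC⟩
        -- x = l y z l⁻¹ = (l y l⁻¹)(l z l⁻¹)
        have h4 : x = (l * y * l⁻¹) * (l * z * l⁻¹) := by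
          have : x = l * (l⁻¹ * x * l) * l⁻¹ := by group
          rw [this, ← hyz]; group
        have h5 : l * y * l⁻¹ ∈ Λ ⊓ S' := by
          refine ⟨hΛn.conj_mem _ hyΛ l, ?_⟩
          have := S'.mul_mem hxS (S'.inv_mem h3)
          rw [h4] at this; simpa [mul_assoc] using this
        rw [h1', Subgroup.mem_bot] at h5
        have h6 : y = 1 := by
          rw [mul_inv_eq_one] at h5; exact mul_eq_left.1 h5
        rw [h6, one_mul] at hyz
        rw [← hyz]; exact ⟨hz, hzC⟩
      · intro h
        have := hl _ h
        refine ⟨by simpa [mul_assoc] using this, ?_⟩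
        simpa [mul_assoc] using hCn.conj_mem _ h.2 l
    refine key l N ?_ ?_ ?_
    · rw [eq_bot_iff]
      rintro x ⟨hxΛ, hxN⟩
      refine hfix x hxΛ fun c hc => ?_
      rw [SetLike.mem_coe, Subgroup.mem_toSubmonoid, Subgroup.mem_normalizer_iff] at hxN
      have hx' : c ∈ Λ ⊔ S' := by rw [h2']; trivial
      obtain ⟨y, hy, z, hz, rfl⟩ := Subgroup.mem_sup_of_normal_left.1 hx'
      have hzC : z ∈ C := by simpa using C.mul_mem (C.inv_mem (hΛC hy)) hc
      have h3 := (hxN z).1 ⟨hz, hzC⟩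
      have h4 : x * z * x⁻¹ * z⁻¹ ∈ Λ ⊓ S' := by
        refine ⟨?_, S'.mul_mem h3.1 (S'.inv_mem hz)⟩
        have := Λ.mul_mem hxΛ (hΛn.conj_mem _ (Λ.inv_mem hxΛ) z)
        simpa [mul_assoc] using this
      rw [h1', Subgroup.mem_bot] at h4
      have h5 : x * z = z * x := by
        rw [mul_inv_eq_one, mul_inv_eq_iff_eq_mul] at h4; exact h4
      rw [mul_assoc, ← h5, ← mul_assoc, hab y hy x hxΛ, mul_assoc]
    · have hle : (S' ⊓ C) ≤ S' := inf_le_left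
      intro g hg
      rw [Subgroup.mem_normalizer_iff]
      intro h
      constructor
      · rintro ⟨ha, hb⟩
        exact ⟨S'.mul_mem (S'.mul_mem hg ha) (S'.inv_mem hg), hCn.conj_mem _ hb g⟩
      · rintro ⟨ha, hb⟩
        refine ⟨?_, ?_⟩
        · have := S'.mul_mem (S'.mul_mem (S'.inv_mem hg) ha) hg
          simpa [mul_assoc] using this
        · have := hCn.conj_mem _ hb g⁻¹
          simpa [mul_assoc] using this
    · intro g hg
      rw [Subgroup.mem_normalizer_iff]
      intro h
      have hgS : ∀ x, x ∈ S ⊓ C ↔ g * x * g⁻¹ ∈ S ⊓ C := by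
        intro x
        constructor
        · rintro ⟨ha, hb⟩
          exact ⟨S.mul_mem (S.mul_mem hg ha) (S.inv_mem hg), hCn.conj_mem _ hb g⟩
        · rintro ⟨ha, hb⟩
          refine ⟨?_, ?_⟩
          · have := S.mul_mem (S.mul_mem (S.inv_mem hg) ha) hg
            simpa [mul_assoc] using this
          · have := hCn.conj_mem _ hb g⁻¹
            simpa [mul_assoc] using this
      rw [hS'conj, hS'conj, hgS]
      have : g * (l⁻¹ * h * l) * g⁻¹ = l⁻¹ * (l * g * l⁻¹ * h * (l * g * l⁻¹)⁻¹) * l := by group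
      rw [this]

lemma orderLemma {G : Type*} [Group G] [Finite G] (V A : Subgroup G) [hVn : V.Normal]
    [hAn : A.Normal] (hab : ∀ a ∈ V, ∀ b ∈ V, a * b = b * a) (hV : V ≠ ⊥)
    (irr : ∀ X : Subgroup G, X ≤ V → X.Normal → X = ⊥ ∨ X = V)
    (hA : ∀ a ∈ A, ∀ b ∈ A, ∀ v ∈ V, (a * b) * v * (a * b)⁻¹ = (b * a) * v * (b * a)⁻¹) :
    ∀ a ∈ A, ∀ v ∈ V, a ^ (Nat.card V - 1) * v = v * a ^ (Nat.card V - 1) := by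
  classical
  let St : Subgroup G → Prop := fun X => X ≤ V ∧ ∀ a ∈ A, ∀ x ∈ X, a * x * a⁻¹ ∈ X
  have hfin : Set.Finite {X : Subgroup G | X ≠ ⊥ ∧ St X} := Set.toFinite _
  obtain ⟨W, hW⟩ := hfin.exists_minimal ⟨V, hV, le_rfl, fun a _ x hx => hVn.conj_mem x hx a⟩
  obtain ⟨⟨hW0, hWV, hWA⟩, hmin⟩ := hW
  have hWmin : ∀ X : Subgroup G, St X → X ≤ W → X = ⊥ ∨ X = W := by
    intro X hX hXW
    by_cases h : X = ⊥
    · exact Or.inl h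
    · exact Or.inr (le_antisymm hXW (hmin ⟨h, hX⟩ hXW))
  set m := Nat.card W with hm
  -- claim 1
  have claim1 : ∀ a ∈ A, ∀ w ∈ W, a ^ (m - 1) * w = w * a ^ (m - 1) := by
    intro a ha
    let β := {x : G // x ∈ W ∧ x ≠ 1}
    let σ : Equiv.Perm β :=
      { toFun := fun x => ⟨a * x * a⁻¹, hWA a ha x x.2.1, by
          intro h; exact x.2.2 (by simpa using h)⟩
        invFun := fun x => ⟨a⁻¹ * x * a, by simpa using hWA a⁻¹ (A.inv_mem ha) x x.2.1, by
          intro h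
          apply x.2.2
          have := congrArg (fun y => a * y * a⁻¹) h
          simpa [mul_assoc] using this⟩
        left_inv := fun x => Subtype.ext (by simp [mul_assoc])
        right_inv := fun x => Subtype.ext (by simp [mul_assoc]) }
    have hσ : ∀ (i : ℤ) (x : β), (((σ ^ i) x : β) : G) = a ^ i * x * (a ^ i)⁻¹ := by
      intro i
      induction i using Int.induction_on with
      | zero => intro x; simp
      | succ i ih =>
        intro x
        rw [zpow_add_one, Equiv.Perm.mul_apply, ih]
        change a ^ (i : ℤ) * (a * x * a⁻¹) * (a ^ (i : ℤ))⁻¹ = _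
        rw [zpow_add_one]; group
      | pred i ih =>
        intro x
        rw [zpow_sub_one, Equiv.Perm.mul_apply, ih]
        change a ^ (-i : ℤ) * (a⁻¹ * x * a) * (a ^ (-i : ℤ))⁻¹ = _
        rw [zpow_sub_one]; group
    have hfree : ∀ (i : ℤ) (x : β), (σ ^ i) x = x → σ ^ i = 1 := by
      intro i x hx
      let X : Subgroup G := W ⊓ Subgroup.centralizer {a ^ i}
      have hXmem : ∀ y, y ∈ X ↔ y ∈ W ∧ y * a ^ i = a ^ i * y := by
        intro y
        rw [Subgroup.mem_inf, Subgroup.mem_centralizer_singleton_iff]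
      have hXS : St X := by
        refine ⟨inf_le_left.trans hWV, fun b hb y hy => ?_⟩
        rw [hXmem] at hy ⊢
        refine ⟨hWA b hb y hy.1, ?_⟩
        have h3 := hA (a ^ i) (A.zpow_mem ha i) b hb y (hWV hy.1)
        have h4 : a ^ i * y * (a ^ i)⁻¹ = y := by rw [← hy.2]; group
        have h5 : (a ^ i) * (b * y * b⁻¹) * (a ^ i)⁻¹ = b * y * b⁻¹ := by
          calc (a ^ i) * (b * y * b⁻¹) * (a ^ i)⁻¹ = (a ^ i * b) * y * (a ^ i * b)⁻¹ := by group
            _ = (b * a ^ i) * y * (b * a ^ i)⁻¹ := h3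
            _ = b * (a ^ i * y * (a ^ i)⁻¹) * b⁻¹ := by group
            _ = _ := by rw [h4]
        rw [mul_inv_eq_iff_eq_mul] at h5
        exact h5.symm
      have hxX : (x : G) ∈ X := by
        rw [hXmem]
        refine ⟨x.2.1, ?_⟩
        have := hσ i x
        rw [hx] at this
        rw [eq_mul_inv_iff_mul_eq] at this
        exact this
      rcases hWmin X hXS inf_le_left with h | h
      · rw [h, Subgroup.mem_bot] at hxX
        exact absurd hxX x.2.2
      · refine Equiv.ext fun y => Subtype.ext ?_
        rw [hσ]
        have hy : (y : G) ∈ X := by rw [h]; exact y.2.1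
        rw [hXmem] at hy
        rw [← hy.2]; simp
    have hstab : ∀ b : β, MulAction.stabilizer (Subgroup.zpowers σ) b = ⊥ := by
      intro b
      rw [eq_bot_iff]
      rintro ⟨g, hg⟩ hgb
      obtain ⟨i, rfl⟩ := hg
      rw [MulAction.mem_stabilizer_iff] at hgb
      have := hfree i b hgb
      rw [Subgroup.mem_bot]
      exact Subtype.ext this
    have hcard := Nat.card_congr (MulAction.selfEquivOrbitsQuotientProd hstab)
    rw [Nat.card_prod, Nat.card_zpowers] at hcard
    have hβ : Nat.card β = m - 1 := by
      have e : β ≃ {w : W // w ≠ 1} :=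
        { toFun := fun x => ⟨⟨x, x.2.1⟩, fun h => x.2.2 (congrArg Subtype.val h)⟩
          invFun := fun x => ⟨x.1, x.1.2, fun h => x.2 (Subtype.ext h)⟩
          left_inv := fun x => rfl
          right_inv := fun x => rfl }
      rw [Nat.card_congr e]
      have : Fintype W := Fintype.ofFinite W
      rw [Nat.card_eq_fintype_card, hm, Nat.card_eq_fintype_card, Fintype.card_subtype_compl]
      simp
    have hpow : σ ^ (m - 1) = 1 := by
      apply orderOf_dvd_iff_pow_eq_one.1
      rw [← hβ, hcard]; exact dvd_mul_left _ _
    intro w hw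
    by_cases hw1 : w = 1
    · simp [hw1]
    have h3 := hσ ((m - 1 : ℕ) : ℤ) ⟨w, hw, hw1⟩
    rw [zpow_natCast, hpow, zpow_natCast] at h3
    rw [eq_mul_inv_iff_mul_eq] at h3
    exact h3.symm
  -- the subgroup of elements fixed by all powers
  have claim2 : ∃ k, Nat.card V = m ^ k := by
    have hfin2 : Set.Finite {X : Subgroup G | St X ∧ ∃ k, Nat.card X = m ^ k} := Set.toFinite _
    obtain ⟨U, hU⟩ := hfin2.exists_maximal ⟨⊥, ⟨bot_le, by
      intro a _ x hx; rw [Subgroup.mem_bot] at hx ⊢; simp [hx]⟩, 0, by simp⟩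
    obtain ⟨⟨⟨hUV, hUA⟩, k, hk⟩, hmax⟩ := hU
    by_cases hex : ∀ g : G, ∀ w ∈ W, g * w * g⁻¹ ∈ U
    · refine ⟨k, ?_⟩
      rw [← hk]
      have h3 : Subgroup.normalClosure (W : Set G) ≤ U := by
        rw [Subgroup.normalClosure, Subgroup.closure_le]
        intro x hx
        rw [Group.mem_conjugatesOfSet_iff] at hx
        obtain ⟨w, hw, hc⟩ := hx
        obtain ⟨g, hg⟩ := isConj_iff.1 hc
        rw [← hg]; exact hex g w hw
      have h4 : W ≤ Subgroup.normalClosure (W : Set G) := Subgroup.le_normalClosure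
      rcases irr _ (h3.trans hUV) Subgroup.normalClosure_normal with h | h
      · exact absurd (eq_bot_iff.2 (h ▸ h4)) hW0
      · rw [le_antisymm hUV (h ▸ h3)]
    · exfalso
      push Not at hex
      obtain ⟨g, w₀, hw₀, hgw⟩ := hex
      have hdisj : ∀ w ∈ W, g * w * g⁻¹ ∈ U → w = 1 := by
        let X : Subgroup G := W ⊓ U.comap (MulAut.conj g).toMonoidHom
        have hXmem : ∀ y, y ∈ X ↔ y ∈ W ∧ g * y * g⁻¹ ∈ U := by
          intro y; rw [Subgroup.mem_inf, Subgroup.mem_comap]; rfl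
        have hXS : St X := by
          refine ⟨inf_le_left.trans hWV, fun b hb y hy => ?_⟩
          rw [hXmem] at hy ⊢
          refine ⟨hWA b hb y hy.1, ?_⟩
          have := hUA (g * b * g⁻¹) (hAn.conj_mem b hb g) _ hy.2
          convert this using 1
          group
        intro w hw hwU
        have hwX : w ∈ X := (hXmem w).2 ⟨hw, hwU⟩
        rcases hWmin X hXS inf_le_left with h | h
        · rwa [h, Subgroup.mem_bot] at hwX
        · exact absurd ((hXmem w₀).1 (h ▸ hw₀)).2 hgw
      have hcV : ∀ w ∈ W, g * w * g⁻¹ ∈ V := fun w hw => hVn.conj_mem w (hWV hw) g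
      let U' : Subgroup G :=
        { carrier := {x | ∃ u ∈ U, ∃ w ∈ W, x = u * (g * w * g⁻¹)}
          one_mem' := ⟨1, U.one_mem, 1, W.one_mem, by simp⟩
          mul_mem' := by
            rintro _ _ ⟨u, hu, w, hw, rfl⟩ ⟨u', hu', w', hw', rfl⟩
            refine ⟨u * u', U.mul_mem hu hu', w * w', W.mul_mem hw hw', ?_⟩
            have := hab _ (hcV w hw) u' (hUV hu')
            calc u * (g * w * g⁻¹) * (u' * (g * w' * g⁻¹))
                = u * ((g * w * g⁻¹) * u') * (g * w' * g⁻¹) := by group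
              _ = _ := by rw [this]; group
          inv_mem' := by
            rintro _ ⟨u, hu, w, hw, rfl⟩
            refine ⟨u⁻¹, U.inv_mem hu, w⁻¹, W.inv_mem hw, ?_⟩
            rw [mul_inv_rev, hab _ (V.inv_mem (hcV w hw)) _ (V.inv_mem (hUV hu))]
            group }
      have hU'S : St U' := by
        constructor
        · rintro _ ⟨u, hu, w, hw, rfl⟩
          exact V.mul_mem (hUV hu) (hcV w hw)
        · rintro a ha _ ⟨u, hu, w, hw, rfl⟩
          refine ⟨a * u * a⁻¹, hUA a ha u hu, (g⁻¹ * a * g) * w * (g⁻¹ * a * g)⁻¹,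
            hWA _ (by simpa using hAn.conj_mem a ha g⁻¹) w hw, ?_⟩
          group
      have hU'card : Nat.card U' = m ^ (k + 1) := by
        rw [pow_succ, ← hk, hm, ← Nat.card_prod]
        symm
        refine Nat.card_congr (Equiv.ofBijective
          (fun x : U × W => (⟨x.1 * (g * x.2 * g⁻¹), x.1, x.1.2, x.2, x.2.2, rfl⟩ : U')) ⟨?_, ?_⟩)
        · rintro ⟨u, w⟩ ⟨u', w'⟩ h
          have h3 : (u : G) * (g * w * g⁻¹) = u' * (g * w' * g⁻¹) := congrArg Subtype.val h
          have h4 : g * ((w : G) * (w' : G)⁻¹) * g⁻¹ = (u : G)⁻¹ * u' := by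
            calc g * ((w : G) * (w' : G)⁻¹) * g⁻¹
                = (u : G)⁻¹ * (u * (g * w * g⁻¹)) * (g * w' * g⁻¹)⁻¹ := by group
              _ = (u : G)⁻¹ * (u' * (g * w' * g⁻¹)) * (g * w' * g⁻¹)⁻¹ := by rw [h3]
              _ = _ := by group
          have h5 := hdisj _ (W.mul_mem w.2 (W.inv_mem w'.2)) (by
            rw [h4]; exact U.mul_mem (U.inv_mem u.2) u'.2)
          have h6 : w = w' := Subtype.ext (mul_inv_eq_one.1 h5)
          subst h6
          have h7 : u = u' := Subtype.ext (mul_right_cancel h3)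
          rw [h7]
        · rintro ⟨_, u, hu, w, hw, rfl⟩
          exact ⟨(⟨u, hu⟩, ⟨w, hw⟩), rfl⟩
      have hle : U ≤ U' := fun u hu => ⟨u, hu, 1, W.one_mem, by simp⟩
      have := hmax ⟨hU'S, k + 1, hU'card⟩ hle
      exact hgw (this ⟨1, U.one_mem, w₀, hw₀, by simp⟩)
  obtain ⟨k, hk⟩ := claim2
  have hdvd : m - 1 ∣ Nat.card V - 1 := by
    rw [hk]; simpa using Nat.sub_dvd_pow_sub_pow m 1 k
  have claim1' : ∀ a ∈ A, ∀ w ∈ W, a ^ (Nat.card V - 1) * w = w * a ^ (Nat.card V - 1) := by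
    intro a ha w hw
    obtain ⟨j, hj⟩ := hdvd
    rw [hj, pow_mul]
    exact Commute.pow_left (claim1 a ha w hw) j
  let Y : Subgroup G := V ⊓ Subgroup.centralizer {x | ∃ a ∈ A, x = a ^ (Nat.card V - 1)}
  have hYmem : ∀ y, y ∈ Y ↔ y ∈ V ∧ ∀ a ∈ A,
      a ^ (Nat.card V - 1) * y = y * a ^ (Nat.card V - 1) := by
    intro y
    rw [Subgroup.mem_inf, Subgroup.mem_centralizer_iff]
    refine and_congr_right fun _ => ⟨fun h a ha => h _ ⟨a, ha, rfl⟩, ?_⟩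
    rintro h _ ⟨a, ha, rfl⟩
    exact h a ha
  have hYn : Y.Normal := by
    constructor
    intro y hy g
    rw [hYmem] at hy ⊢
    refine ⟨hVn.conj_mem y hy.1 g, fun a ha => ?_⟩
    have h3 := hy.2 (g⁻¹ * a * g) (by simpa using hAn.conj_mem a ha g⁻¹)
    have h4 : (g⁻¹ * a * g) ^ (Nat.card V - 1) = g⁻¹ * a ^ (Nat.card V - 1) * g := by
      have := conj_pow (i := Nat.card V - 1) (a := g⁻¹) (b := a)
      simpa using this
    rw [h4] at h3
    calc a ^ (Nat.card V - 1) * (g * y * g⁻¹)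
        = g * ((g⁻¹ * a ^ (Nat.card V - 1) * g) * y) * g⁻¹ := by group
      _ = g * (y * (g⁻¹ * a ^ (Nat.card V - 1) * g)) * g⁻¹ := by rw [h3]
      _ = _ := by group
  have hWY : W ≤ Y := fun w hw => (hYmem w).2 ⟨hWV hw, fun a ha => claim1' a ha w hw⟩
  rcases irr Y inf_le_left hYn with h | h
  · exact absurd (eq_bot_iff.2 (h ▸ hWY)) hW0
  · intro a ha v hv
    exact ((hYmem v).1 (h ▸ hv)).2 a ha

lemma comm_iff_mul {G : Type*} [Group G] {a b : G} : a * b * a⁻¹ * b⁻¹ = 1 ↔ a * b = b * a := by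
  rw [mul_inv_eq_one, mul_inv_eq_iff_eq_mul]

lemma B1core {G : Type*} [Group G] [Finite G] (p n : ℕ) [hp : Fact p.Prime] (hn : 1 ≤ n)
    (S P I C : Subgroup G) [hPn : P.Normal] [hIn : I.Normal] [hCn : C.Normal]
    (hS : IsCoatom S) (hidx : S.index = p ^ n)
    (hcore : ∀ X : Subgroup G, X.Normal → X ≤ S → X = ⊥)
    (hP : IsPGroup p P) (hIP : ∀ x ∈ I, ∀ y ∈ I, x * y * x⁻¹ * y⁻¹ ∈ P)
    (hcycG : ∃ g₀ : G, ∀ g : G, ∃ i : ℤ, g₀ ^ i * g ∈ I)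
    (hcycC : ∃ g₀ ∈ C, ∀ g ∈ C, ∃ i : ℤ, g₀ ^ i * g ∈ I)
    (hCI : ∀ c ∈ C, ∀ x ∈ I, ∃ j : ℕ, ∃ y ∈ P, c * x * c⁻¹ * x⁻¹ = x ^ ((p ^ n - 1) * j) * y) :
    ∃ V : Subgroup G, V.Normal ∧ V ⊓ S = ⊥ ∧ (∀ a ∈ V, ∀ b ∈ V, a * b = b * a) ∧
      (∀ c ∈ C, ∀ d ∈ C, c * d * c⁻¹ * d⁻¹ ∈ V) ∧ (∀ c ∈ C, c ^ (p ^ n - 1) ∈ V) := by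
  -- properties of nontrivial abelian normal subgroups
  have hsup : ∀ W : Subgroup G, W.Normal → W ≠ ⊥ → W ⊔ S = ⊤ := by
    intro W hW hW0
    have : ¬ W ≤ S := fun h => hW0 (hcore W hW h)
    rw [sup_comm]; exact hS.2 _ (left_lt_sup.2 this)
  have hinf : ∀ W : Subgroup G, W.Normal → W ≠ ⊥ → (∀ a ∈ W, ∀ b ∈ W, a * b = b * a) →
      ∀ Z : Subgroup G, Z.Normal → (∀ z ∈ Z, ∀ w ∈ W, z * w = w * z) → Z ⊓ S = ⊥ := by
    intro W hW hW0 hWab Z hZ hZW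
    apply hcore _ _ inf_le_right
    constructor
    rintro x ⟨hxZ, hxS⟩ g
    have hg : g ∈ W ⊔ S := by rw [hsup W hW hW0]; trivial
    rw [sup_comm] at hg
    obtain ⟨s, hs, w, hw, rfl⟩ := Subgroup.mem_sup_of_normal_right.1 hg
    have : s * w * x * (s * w)⁻¹ = s * x * s⁻¹ := by
      have h3 := hZW x hxZ w hw
      calc s * w * x * (s * w)⁻¹ = s * (w * x) * w⁻¹ * s⁻¹ := by group
        _ = _ := by rw [← h3]; group
    rw [this]
    exact ⟨hZ.conj_mem x hxZ s, S.mul_mem (S.mul_mem hs hxS) (S.inv_mem hs)⟩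
  have hcardW : ∀ W : Subgroup G, W.Normal → W ≠ ⊥ → (∀ a ∈ W, ∀ b ∈ W, a * b = b * a) →
      Nat.card W = p ^ n := by
    intro W hW hW0 hWab
    have h3 := hinf W hW hW0 hWab W hW hWab
    have hc : Subgroup.IsComplement' W S :=
      Subgroup.isComplement'_of_disjoint_and_mul_eq_univ (disjoint_iff.2 h3) (by
        rw [← Subgroup.normal_mul, hsup W hW hW0]; rfl)
    rw [← hidx]
    exact hc.index_eq_card.symm
  -- existence
  have hex : ∃ V : Subgroup G, V.Normal ∧ V ≠ ⊥ ∧ (∀ a ∈ V, ∀ b ∈ V, a * b = b * a) := by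
    by_cases hP0 : P = ⊥
    · by_cases hI0 : I = ⊥
      · refine ⟨⊤, inferInstance, ?_, ?_⟩
        · intro h
          have : S = ⊤ := top_unique (h ▸ bot_le)
          exact hS.1 this
        · intro a _ b _
          obtain ⟨g₀, hg₀⟩ := hcycG
          obtain ⟨i, hi⟩ := hg₀ a
          obtain ⟨j, hj⟩ := hg₀ b
          rw [hI0, Subgroup.mem_bot] at hi hj
          rw [eq_inv_of_mul_eq_one_right hi, eq_inv_of_mul_eq_one_right hj,
            ← zpow_neg, ← zpow_neg, ← zpow_add, ← zpow_add, add_comm]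
      · refine ⟨I, inferInstance, hI0, fun a ha b hb => ?_⟩
        have := hIP a ha b hb
        rw [hP0, Subgroup.mem_bot] at this
        exact comm_iff_mul.1 this
    · refine ⟨(Subgroup.center P).map P.subtype, inferInstance, ?_, ?_⟩
      · have : Nontrivial P := (Subgroup.nontrivial_iff_ne_bot P).2 hP0
        have h3 := hP.bot_lt_center
        rw [Ne, Subgroup.map_eq_bot_iff_of_injective _ P.subtype_injective]
        exact h3.ne'
      · rintro _ ⟨a, ha, rfl⟩ _ ⟨b, hb, rfl⟩
        have := (Subgroup.mem_center_iff.1 ha) b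
        exact (congrArg Subtype.val this).symm
  obtain ⟨V, hVn, hV0, hVab⟩ := hex
  have hVcard := hcardW V hVn hV0 hVab
  have irr : ∀ X : Subgroup G, X ≤ V → X.Normal → X = ⊥ ∨ X = V := by
    intro X hX hXn
    by_cases hX0 : X = ⊥
    · exact Or.inl hX0
    · right
      have h3 := hcardW X hXn hX0 (fun a ha b hb => hVab a (hX ha) b (hX hb))
      exact Subgroup.eq_of_le_of_card_ge hX (by rw [h3, hVcard])
  have hself : ∀ z : G, (∀ v ∈ V, z * v = v * z) → z ∈ V := by
    have hZn : (Subgroup.centralizer (V : Set G)).Normal := inferInstance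
    have h3 := hinf V hVn hV0 hVab _ hZn (fun z hz w hw =>
      (Subgroup.mem_centralizer_iff.1 hz w hw).symm)
    intro z hz
    have hzZ : z ∈ Subgroup.centralizer (V : Set G) := by
      rw [Subgroup.mem_centralizer_iff]; exact fun v hv => (hz v hv).symm
    have hz' : z ∈ V ⊔ S := by rw [hsup V hVn hV0]; trivial
    obtain ⟨v, hv, s, hs, rfl⟩ := Subgroup.mem_sup_of_normal_left.1 hz'
    have hvZ : v ∈ Subgroup.centralizer (V : Set G) := by
      rw [Subgroup.mem_centralizer_iff]; exact fun w hw => hVab w hw v hv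
    have : s ∈ Subgroup.centralizer (V : Set G) ⊓ S :=
      ⟨by simpa using Subgroup.mul_mem _ (Subgroup.inv_mem _ hvZ) hzZ, hs⟩
    rw [h3, Subgroup.mem_bot] at this
    simpa [this] using hv
  have hPV : P ≤ V := by
    have hYn : (V ⊓ Subgroup.centralizer (P : Set G)).Normal := inferInstance
    have hne : ∃ v ∈ V, v ≠ 1 ∧ ∀ x ∈ P, x * v = v * x := by
      let : MulAction P V := MulAction.compHom V
        ((MulAut.conjNormal (H := V)).comp P.subtype)
      have hact : ∀ (x : P) (v : V), ((x • v : V) : G) = x * v * (x : G)⁻¹ :=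
        fun x v => MulAut.conjNormal_apply (x : G) v
      have hd : p ∣ Nat.card V := by rw [hVcard]; exact dvd_pow_self p (by omega)
      obtain ⟨b, hb, hb1⟩ := hP.exists_fixed_point_of_prime_dvd_card_of_fixed_point V hd
        (a := 1) (fun x => Subtype.ext (by rw [hact]; simp))
      refine ⟨b, b.2, fun h => hb1 (Subtype.ext h.symm), fun x hx => ?_⟩
      have h3 := congrArg Subtype.val (hb ⟨x, hx⟩)
      rw [hact] at h3
      exact mul_inv_eq_iff_eq_mul.1 h3
    obtain ⟨v, hv, hv1, hvP⟩ := hne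
    have hvY : v ∈ V ⊓ Subgroup.centralizer (P : Set G) :=
      ⟨hv, Subgroup.mem_centralizer_iff.2 hvP⟩
    rcases irr _ inf_le_left hYn with h | h
    · rw [h, Subgroup.mem_bot] at hvY; exact absurd hvY hv1
    · intro x hx
      apply hself
      intro w hw
      have : w ∈ V ⊓ Subgroup.centralizer (P : Set G) := by rw [h]; exact hw
      exact Subgroup.mem_centralizer_iff.1 this.2 x hx
  -- exponent statement
  have hexp : ∀ A : Subgroup G, A.Normal → (∀ a ∈ A, ∀ b ∈ A, a * b * a⁻¹ * b⁻¹ ∈ V) →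
      ∀ a ∈ A, a ^ (p ^ n - 1) ∈ V := by
    intro A hA hAV a ha
    apply hself
    have := orderLemma V A hVab hV0 irr (by
      intro a ha b hb v hv
      have h3 := hVab _ (hAV a ha b hb) _ (hVn.conj_mem v hv (b * a))
      have e : a * b = (a * b * a⁻¹ * b⁻¹) * (b * a) := by group
      calc (a * b) * v * (a * b)⁻¹
          = (a * b * a⁻¹ * b⁻¹) * ((b * a) * v * (b * a)⁻¹) * (a * b * a⁻¹ * b⁻¹)⁻¹ := by group
        _ = _ := by rw [h3]; group) a ha
    rwa [hVcard] at this
  have hIe := hexp I hIn (fun a ha b hb => hPV (hIP a ha b hb))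
  have hCIV : ∀ c ∈ C, ∀ x ∈ I, c * x * c⁻¹ * x⁻¹ ∈ V := by
    intro c hc x hx
    obtain ⟨j, y, hy, h⟩ := hCI c hc x hx
    rw [h, pow_mul]
    exact V.mul_mem (V.pow_mem (hIe x hx) j) (hPV hy)
  have hCC : ∀ c ∈ C, ∀ d ∈ C, c * d * c⁻¹ * d⁻¹ ∈ V := by
    obtain ⟨g₀, hg₀, hg⟩ := hcycC
    have hq : ∀ c ∈ C, ∀ x ∈ I, Commute (QuotientGroup.mk' V c) (QuotientGroup.mk' V x) := by
      intro c hc x hx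
      have h3 : QuotientGroup.mk' V (c * x * c⁻¹ * x⁻¹) = 1 :=
        (QuotientGroup.eq_one_iff _).2 (hCIV c hc x hx)
      simp only [map_mul, map_inv] at h3
      exact comm_iff_mul.1 h3
    have hdec : ∀ c ∈ C, ∃ i : ℤ, ∃ x ∈ I, x ∈ C ∧ c = g₀ ^ i * x := by
      intro c hc
      obtain ⟨i, hi⟩ := hg c hc
      exact ⟨-i, _, hi, C.mul_mem (C.zpow_mem hg₀ i) hc, by group⟩
    intro c hc d hd
    obtain ⟨i, x, hx, hxC, rfl⟩ := hdec c hc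
    obtain ⟨j, y, hy, hyC, hdy⟩ := hdec d hd
    have h1 : Commute (QuotientGroup.mk' V (g₀ ^ i)) (QuotientGroup.mk' V (g₀ ^ j)) := by
      rw [map_zpow, map_zpow]; exact (Commute.refl _).zpow_zpow _ _
    have h2 := hq _ (C.zpow_mem hg₀ i) y hy
    have h3 := hq _ hd x hx
    have h4 : Commute (QuotientGroup.mk' V (g₀ ^ i)) (QuotientGroup.mk' V d) := by
      rw [hdy, map_mul]; exact h1.mul_right h2
    have h5 : Commute (QuotientGroup.mk' V (g₀ ^ i * x)) (QuotientGroup.mk' V d) := by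
      rw [map_mul]; exact h4.mul_left h3.symm
    have h6 : QuotientGroup.mk' V ((g₀ ^ i * x) * d * (g₀ ^ i * x)⁻¹ * d⁻¹) = 1 := by
      rw [map_mul, map_mul, map_mul, map_inv, map_inv]
      exact comm_iff_mul.2 h5
    exact (QuotientGroup.eq_one_iff _).1 h6
  exact ⟨V, hVn, hinf V hVn hV0 hVab V hVn hVab, hVab, hCC, hexp C hCn hCC⟩

lemma B1 {G : Type*} [Group G] [Finite G] (p n : ℕ) [hp : Fact p.Prime] (hn : 1 ≤ n)
    (S P I C : Subgroup G) [hPn : P.Normal] [hIn : I.Normal] [hCn : C.Normal]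
    (hS : IsCoatom S) (hidx : S.index = p ^ n)
    (hP : IsPGroup p P) (hIP : ∀ x ∈ I, ∀ y ∈ I, x * y * x⁻¹ * y⁻¹ ∈ P)
    (hcycG : ∃ g₀ : G, ∀ g : G, ∃ i : ℤ, g₀ ^ i * g ∈ I)
    (hcycC : ∃ g₀ ∈ C, ∀ g ∈ C, ∃ i : ℤ, g₀ ^ i * g ∈ I)
    (hCI : ∀ c ∈ C, ∀ x ∈ I, ∃ j : ℕ, ∃ y ∈ P, c * x * c⁻¹ * x⁻¹ = x ^ ((p ^ n - 1) * j) * y) :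
    ∃ U N : Subgroup G, U.Normal ∧ N.Normal ∧ U ⊓ S = N ∧
      (∀ a ∈ U, ∀ b ∈ U, a * b * a⁻¹ * b⁻¹ ∈ N) ∧
      (∀ c ∈ C, ∀ d ∈ C, c * d * c⁻¹ * d⁻¹ ∈ U) ∧ (∀ c ∈ C, c ^ (p ^ n - 1) ∈ U) := by
  let N := S.normalCore
  let π := QuotientGroup.mk' N
  have hπ : Function.Surjective π := QuotientGroup.mk'_surjective N
  have hker : π.ker = N := QuotientGroup.ker_mk' N
  have hNS : N ≤ S := Subgroup.normalCore_le S
  have hSc : (S.map π).comap π = S := by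
    rw [Subgroup.comap_map_eq, hker]; exact sup_eq_left.2 hNS
  have hPn' : (P.map π).Normal := hPn.map π hπ
  have hIn' : (I.map π).Normal := hIn.map π hπ
  have hCn' : (C.map π).Normal := hCn.map π hπ
  have hS' : IsCoatom (S.map π) := by
    constructor
    · intro h
      rw [h, Subgroup.comap_top] at hSc
      exact hS.1 hSc.symm
    · intro X hX
      have h3 : S < X.comap π := by
        exact hSc.symm.trans_lt ((Subgroup.comap_lt_comap_of_surjective hπ).2 hX)
      have h4 := hS.2 _ h3
      rw [← Subgroup.map_comap_eq_self_of_surjective hπ X, h4]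
      exact Subgroup.map_top_of_surjective π hπ
  obtain ⟨V, hVn, hVS, hVab, hC1, hC2⟩ := B1core p n hn (S.map π) (P.map π) (I.map π) (C.map π)
    hS' (by rw [← Subgroup.index_comap_of_surjective _ hπ, hSc, hidx])
    (by
      intro X hX hXS
      have h3 : X.comap π ≤ N := by
        have h4 : (X.comap π).Normal := hX.comap π
        apply Subgroup.normal_le_normalCore.2
        exact (Subgroup.comap_mono hXS).trans hSc.le
      rw [← Subgroup.map_comap_eq_self_of_surjective hπ X, eq_bot_iff]
      rintro _ ⟨x, hx, rfl⟩
      rw [Subgroup.mem_bot]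
      exact (QuotientGroup.eq_one_iff x).2 (h3 hx))
    (hP.map π)
    (by
      rintro _ ⟨x, hx, rfl⟩ _ ⟨y, hy, rfl⟩
      exact ⟨_, hIP x hx y hy, by simp⟩)
    (by
      obtain ⟨g₀, h⟩ := hcycG
      refine ⟨π g₀, fun g => ?_⟩
      obtain ⟨g, rfl⟩ := hπ g
      obtain ⟨i, hi⟩ := h g
      exact ⟨i, _, hi, by simp⟩)
    (by
      obtain ⟨g₀, hg₀, h⟩ := hcycC
      refine ⟨π g₀, ⟨g₀, hg₀, rfl⟩, ?_⟩
      rintro _ ⟨g, hg, rfl⟩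
      obtain ⟨i, hi⟩ := h g hg
      exact ⟨i, _, hi, by simp⟩)
    (by
      rintro _ ⟨c, hc, rfl⟩ _ ⟨x, hx, rfl⟩
      obtain ⟨j, y, hy, h⟩ := hCI c hc x hx
      refine ⟨j, π y, ⟨y, hy, rfl⟩, ?_⟩
      have := congrArg π h
      simpa using this)
  refine ⟨V.comap π, N, hVn.comap π, inferInstance, ?_, ?_, ?_, ?_⟩
  · apply le_antisymm
    · rintro x ⟨hxV, hxS⟩
      have : π x ∈ V ⊓ S.map π := ⟨hxV, x, hxS, rfl⟩
      rw [hVS, Subgroup.mem_bot] at this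
      exact (QuotientGroup.eq_one_iff x).1 this
    · intro x hx
      refine ⟨?_, hNS hx⟩
      have : π x = 1 := (QuotientGroup.eq_one_iff x).2 hx
      change π x ∈ V
      rw [this]; exact V.one_mem
  · intro a ha b hb
    have : π (a * b * a⁻¹ * b⁻¹) = 1 := by
      rw [map_mul, map_mul, map_mul, map_inv, map_inv]
      exact comm_iff_mul.2 (hVab _ ha _ hb)
    exact (QuotientGroup.eq_one_iff _).1 this
  · intro c hc d hd
    have := hC1 _ ⟨c, hc, rfl⟩ _ ⟨d, hd, rfl⟩
    change π _ ∈ V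
    simpa using this
  · intro c hc
    have := hC2 _ ⟨c, hc, rfl⟩
    change π _ ∈ V
    simpa using this

lemma B3 {G : Type*} [Group G] [Finite G] (p n : ℕ) [hp : Fact p.Prime] (hn : 1 ≤ n)
    (S S' P I C Λ : Subgroup G) [hPn : P.Normal] [hIn : I.Normal] [hCn : C.Normal]
    [hΛn : Λ.Normal]
    (hS : IsCoatom S) (hidx : S.index = p ^ n) (hS' : IsCoatom S')
    (hP : IsPGroup p P) (hIP : ∀ x ∈ I, ∀ y ∈ I, x * y * x⁻¹ * y⁻¹ ∈ P)
    (hcycG : ∃ g₀ : G, ∀ g : G, ∃ i : ℤ, g₀ ^ i * g ∈ I)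
    (hcycC : ∃ g₀ ∈ C, ∀ g ∈ C, ∃ i : ℤ, g₀ ^ i * g ∈ I)
    (hCI : ∀ c ∈ C, ∀ x ∈ I, ∃ j : ℕ, ∃ y ∈ P, c * x * c⁻¹ * x⁻¹ = x ^ ((p ^ n - 1) * j) * y)
    (hΛC : Λ ≤ C)
    (hC1 : ∀ c ∈ C, ∀ d ∈ C, c * d * c⁻¹ * d⁻¹ ∈ Λ)
    (hC2 : ∀ c ∈ C, c ^ (p ^ n - 1) ∈ Λ)
    (hΛ : ∀ X : Subgroup G, X.Normal → (∀ c ∈ C, ∀ d ∈ C, c * d * c⁻¹ * d⁻¹ ∈ X) →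
      (∀ c ∈ C, c ^ (p ^ n - 1) ∈ X) → Λ ≤ X)
    (hGC : ∀ g h : G, g * h * g⁻¹ * h⁻¹ ∈ C) (hn1 : n = 1 → C = ⊤)
    (hSS' : Λ ⊓ S = Λ ⊓ S') :
    ∃ g : G, ∀ x ∈ S, g * x * g⁻¹ ∈ S' := by
  obtain ⟨U, N, hUn, hNn, hUS, hUN, hCU, hCU'⟩ := B1 p n hn S P I C hS hidx hP hIP hcycG hcycC hCI
  have hΛU : Λ ≤ U := hΛ U hUn hCU hCU'
  have hpn : 1 ≤ p ^ n := Nat.one_le_pow _ _ hp.out.pos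
  have hnot : ¬ Λ ≤ S := by
    intro hle
    by_cases hCS : C ≤ S
    · by_cases h1 : n = 1
      · rw [hn1 h1] at hCS
        exact hS.1 (top_unique hCS)
      · have hSn : S.Normal := by
          constructor
          intro x hx g
          have := S.mul_mem (hCS (hGC g x)) hx
          simpa using this
        -- G/S has an element of order p
        have hcardq : Nat.card (G ⧸ S) = p ^ n := hidx
        have hd : p ∣ Nat.card (G ⧸ S) := by rw [hcardq]; exact dvd_pow_self p (by omega)
        obtain ⟨x, hx⟩ := exists_prime_orderOf_dvd_card' p hd
        let Y := (Subgroup.zpowers x).comap (QuotientGroup.mk' S)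
        have hSY : S ≤ Y := by
          intro s hs
          have : QuotientGroup.mk' S s = 1 := (QuotientGroup.eq_one_iff s).2 hs
          change QuotientGroup.mk' S s ∈ Subgroup.zpowers x
          rw [this]; exact Subgroup.one_mem _
        have hYi : Y.index * p = p ^ n := by
          rw [Subgroup.index_comap_of_surjective _ (QuotientGroup.mk'_surjective S)]
          have := Subgroup.index_mul_card (Subgroup.zpowers x)
          rwa [Nat.card_zpowers, hx, hcardq] at this
        rcases eq_or_lt_of_le hSY with h | h
        · rw [← h, hidx] at hYi
          have : p ^ n * p = p ^ n * 1 := by rw [hYi, mul_one]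
          exact hp.out.one_lt.ne' (Nat.eq_of_mul_eq_mul_left (by omega) this)
        · have hY := hS.2 _ h
          rw [hY, Subgroup.index_top, one_mul] at hYi
          have h8 := Nat.pow_right_injective hp.out.two_le (a₁ := n) (a₂ := 1) (by simpa using hYi.symm)
          exact h1 h8
    · have hSC : S ⊔ C = ⊤ := hS.2 _ (left_lt_sup.2 hCS)
      have h3 : S.relIndex C = p ^ n := by
        have e1 : C.relIndex S = C.index := by
          rw [← Subgroup.relIndex_top_right C, ← hSC, sup_comm, Subgroup.relIndex_sup_left]
        have e2 := Subgroup.relIndex_mul_index (inf_le_left : S ⊓ C ≤ S)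
        have e3 := Subgroup.relIndex_mul_index (inf_le_right : S ⊓ C ≤ C)
        rw [Subgroup.inf_relIndex_left, e1] at e2
        rw [Subgroup.inf_relIndex_right] at e3
        rw [← e3, mul_comm] at e2
        have e4 : C.index ≠ 0 := Subgroup.FiniteIndex.index_ne_zero
        rw [← hidx]
        exact (Nat.eq_of_mul_eq_mul_right (Nat.pos_of_ne_zero e4) e2).symm
      have h4 : S.relIndex C ∣ Λ.relIndex C := Subgroup.relIndex_dvd_of_le_left C hle
      have h5 : p ∣ Nat.card (C ⧸ Λ.subgroupOf C) := by
        refine dvd_trans ?_ h4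
        rw [h3]; exact dvd_pow_self p (by omega)
      obtain ⟨x, hx⟩ := exists_prime_orderOf_dvd_card' p h5
      have hx1 : x ^ (p ^ n - 1) = 1 := by
        obtain ⟨c, rfl⟩ := QuotientGroup.mk'_surjective _ x
        rw [← map_pow]
        refine (QuotientGroup.eq_one_iff _).2 ?_
        rw [Subgroup.mem_subgroupOf]
        simpa using hC2 c c.2
      have h6 : p ∣ p ^ n - 1 := (dvd_of_eq hx.symm).trans (orderOf_dvd_of_pow_eq_one hx1)
      have h7 : p ∣ p ^ n := dvd_pow_self p (by omega)
      have h8 : p ∣ 1 := by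
        have := Nat.dvd_sub h7 h6
        rwa [Nat.sub_sub_self hpn] at this
      exact hp.out.one_lt.ne' (Nat.dvd_one.1 h8)
  have hnot' : ¬ Λ ≤ S' := by
    intro h
    rw [inf_eq_left.2 h] at hSS'
    exact hnot (inf_eq_left.1 hSS')
  have hsup : Λ ⊔ S = ⊤ := by rw [sup_comm]; exact hS.2 _ (left_lt_sup.2 hnot)
  have hsup' : Λ ⊔ S' = ⊤ := by rw [sup_comm]; exact hS'.2 _ (left_lt_sup.2 hnot')
  obtain ⟨D, hD⟩ : ∃ D, D = Λ ⊓ S := ⟨_, rfl⟩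
  have hDN : D = Λ ⊓ N := by
    rw [hD, ← hUS, ← inf_assoc, inf_eq_left.2 hΛU]
  have hDn : D.Normal := by rw [hDN]; infer_instance
  have hDS : D ≤ S := hD ▸ inf_le_right
  have hDS' : D ≤ S' := hD ▸ hSS' ▸ inf_le_right
  let π := QuotientGroup.mk' D
  have hπ : Function.Surjective π := QuotientGroup.mk'_surjective D
  have hker : π.ker = D := QuotientGroup.ker_mk' D
  have hmem : ∀ T : Subgroup G, D ≤ T → ∀ x, π x ∈ T.map π → x ∈ T := by
    intro T hT x hx
    have h3 : (T.map π).comap π = T := by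
      rw [Subgroup.comap_map_eq, hker]; exact sup_eq_left.2 hT
    rw [← h3]; exact hx
  have hΛn' : (Λ.map π).Normal := hΛn.map π hπ
  have hCn' : (C.map π).Normal := hCn.map π hπ
  have hSmap : IsCoatom (S.map π) := by
    have hSc : (S.map π).comap π = S := by
      rw [Subgroup.comap_map_eq, hker]; exact sup_eq_left.2 hDS
    constructor
    · intro h
      rw [h, Subgroup.comap_top] at hSc
      exact hS.1 hSc.symm
    · intro X hX
      have h3 : S < X.comap π :=
        hSc.symm.trans_lt ((Subgroup.comap_lt_comap_of_surjective hπ).2 hX)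
      have h4 := hS.2 _ h3
      rw [← Subgroup.map_comap_eq_self_of_surjective hπ X, h4]
      exact Subgroup.map_top_of_surjective π hπ
  have hinf : ∀ T : Subgroup G, D = Λ ⊓ T → Λ.map π ⊓ T.map π = ⊥ := by
    intro T hT
    rw [eq_bot_iff]
    rintro _ ⟨⟨x, hx, rfl⟩, hxT⟩
    have hxT' : x ∈ T := hmem T (hT ▸ inf_le_right) x hxT
    have : x ∈ D := by rw [hT]; exact ⟨hx, hxT'⟩
    exact (QuotientGroup.eq_one_iff x).2 this
  have hsupm : ∀ T : Subgroup G, Λ ⊔ T = ⊤ → Λ.map π ⊔ T.map π = ⊤ := by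
    intro T hT
    rw [← Subgroup.map_sup, hT]; exact Subgroup.map_top_of_surjective π hπ
  have hcard : Nat.card (Λ.map π) = p ^ n := by
    have hc : Subgroup.IsComplement' (Λ.map π) (S.map π) :=
      Subgroup.isComplement'_of_disjoint_and_mul_eq_univ (disjoint_iff.2 (hinf S hD)) (by
        rw [← Subgroup.normal_mul, hsupm S hsup]; rfl)
    have hSc : (S.map π).comap π = S := by
      rw [Subgroup.comap_map_eq, hker]; exact sup_eq_left.2 hDS
    rw [← hidx, ← hc.index_eq_card, ← Subgroup.index_comap_of_surjective _ hπ, hSc]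
  obtain ⟨g, hg⟩ := B2 p n hn (Λ.map π) (C.map π) (S.map π) (S'.map π)
    (by
      rintro _ ⟨x, hx, rfl⟩ _ ⟨y, hy, rfl⟩
      have h3 : x * y * x⁻¹ * y⁻¹ ∈ D := by
        rw [hDN]
        exact ⟨Λ.mul_mem (Λ.mul_mem (Λ.mul_mem hx hy) (Λ.inv_mem hx)) (Λ.inv_mem hy),
          hUN x (hΛU hx) y (hΛU hy)⟩
      have h4 : π (x * y * x⁻¹ * y⁻¹) = 1 := (QuotientGroup.eq_one_iff _).2 h3
      rw [map_mul, map_mul, map_mul, map_inv, map_inv] at h4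
      exact comm_iff_mul.1 h4)
    hSmap (hinf S hD) (hsupm S hsup) (hinf S' (hD.trans hSS')) (hsupm S' hsup') hcard
    (Subgroup.map_mono hΛC)
    (by
      rintro _ ⟨c, hc, rfl⟩ _ ⟨d, hd, rfl⟩
      exact ⟨_, hC1 c hc d hd, by simp⟩)
    (by
      rintro _ ⟨c, hc, rfl⟩
      exact ⟨_, hC2 c hc, by simp⟩)
    (by
      intro g h
      obtain ⟨g, rfl⟩ := hπ g
      obtain ⟨h, rfl⟩ := hπ h
      exact ⟨_, hGC g h, by simp⟩)
    (by
      intro h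
      rw [hn1 h]; exact Subgroup.map_top_of_surjective π hπ)
  obtain ⟨g, rfl⟩ := hπ g
  refine ⟨g, fun x hx => hmem S' hDS' _ ?_⟩
  have := hg (π x) ⟨x, hx, rfl⟩
  simpa using this

section Ramification

open IsLocalRing

variable {A : Type*} [CommRing A] [IsLocalRing A] {G : Type*} [Group G] [MulSemiringAction G A]

lemma R_smul_mem (g : G) {x : A} (hx : x ∈ maximalIdeal A) : g • x ∈ maximalIdeal A := by
  rw [mem_maximalIdeal, mem_nonunits_iff] at hx ⊢
  intro h
  apply hx
  have := h.map (MulSemiringAction.toRingHom G A g⁻¹)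
  simpa using this

lemma R_smul_mem_pow (g : G) (N : ℕ) : ∀ {x : A}, x ∈ maximalIdeal A ^ N →
    g • x ∈ maximalIdeal A ^ N := by
  induction N with
  | zero => intro x _; simp
  | succ N ih =>
    intro x hx
    rw [pow_succ] at hx ⊢
    induction hx using Submodule.mul_induction_on' with
    | mem_mul_mem a ha b hb =>
      rw [smul_mul']
      exact Ideal.mul_mem_mul (ih ha) (R_smul_mem g hb)
    | add a ha b hb h1 h2 =>
      rw [smul_add]; exact Ideal.add_mem _ h1 h2

variable (A G) in
/-- inertia -/
def RI : Subgroup G where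
  carrier := {σ | ∀ x : A, σ • x - x ∈ maximalIdeal A}
  one_mem' := by intro x; simp
  mul_mem' := by
    intro a b ha hb x
    have h1 := R_smul_mem a (hb x)
    have h2 := Ideal.add_mem _ h1 (ha x)
    rw [smul_sub] at h2
    rw [mul_smul]
    simpa using h2
  inv_mem' := by
    intro a ha x
    have h1 := ha (a⁻¹ • x)
    rw [smul_inv_smul] at h1
    rw [← neg_sub]; exact Ideal.neg_mem_iff _ |>.2 h1

variable (A G) in
/-- wild inertia -/
def RP : Subgroup G where
  carrier := {σ | (∀ x : A, σ • x - x ∈ maximalIdeal A) ∧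
    ∀ x ∈ maximalIdeal A, σ • x - x ∈ maximalIdeal A ^ 2}
  one_mem' := by constructor <;> intro x <;> simp
  mul_mem' := by
    intro a b ha hb
    refine ⟨(RI A G).mul_mem ha.1 hb.1, fun x hx => ?_⟩
    have h1 := R_smul_mem_pow a 2 (hb.2 x hx)
    have h2 := Ideal.add_mem _ h1 (ha.2 x hx)
    rw [smul_sub] at h2
    rw [mul_smul]
    simpa using h2
  inv_mem' := by
    intro a ha
    refine ⟨(RI A G).inv_mem ha.1, fun x hx => ?_⟩
    have h1 := ha.2 (a⁻¹ • x) (R_smul_mem _ hx)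
    rw [smul_inv_smul] at h1
    rw [← neg_sub]; exact Ideal.neg_mem_iff _ |>.2 h1

instance RI_normal : (RI A G).Normal := by
  constructor
  intro σ hσ g x
  have h1 := R_smul_mem g (hσ (g⁻¹ • x))
  rw [smul_sub, smul_inv_smul] at h1
  simpa [mul_smul] using h1

instance RP_normal : (RP A G).Normal := by
  constructor
  intro σ hσ g
  refine ⟨(RI_normal (A := A) (G := G)).conj_mem σ hσ.1 g, fun x hx => ?_⟩
  have h1 := R_smul_mem_pow g 2 (hσ.2 (g⁻¹ • x) (R_smul_mem _ hx))
  rw [smul_sub, smul_inv_smul] at h1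
  simpa [mul_smul] using h1

lemma R_scalar [IsDomain A] [IsDiscreteValuationRing A] (σ : G) (hσ : σ ∈ RI A G) :
    ∃ u : A, IsUnit u ∧ ∀ x ∈ maximalIdeal A, σ • x - u * x ∈ maximalIdeal A ^ 2 := by
  obtain ⟨π, hπ⟩ := IsDiscreteValuationRing.exists_irreducible A
  have hm := hπ.maximalIdeal_eq
  have hπm : π ∈ maximalIdeal A := by rw [hm]; exact Ideal.mem_span_singleton_self π
  have h1 := R_smul_mem σ hπm
  have h1' := R_smul_mem σ⁻¹ hπm
  rw [hm, Ideal.mem_span_singleton'] at h1 h1'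
  obtain ⟨u, hu⟩ := h1
  obtain ⟨v, hv⟩ := h1'
  refine ⟨u, ?_, ?_⟩
  · have h2 : π = (σ • v) * u * π := by
      rw [mul_assoc, hu, ← smul_mul', hv, smul_inv_smul]
    have h3 : (σ • v) * u = 1 := by
      have : ((σ • v) * u) * π = 1 * π := by rw [← h2, one_mul]
      exact mul_right_cancel₀ hπ.ne_zero this
    exact IsUnit.of_mul_eq_one_right _ h3
  · intro x hx
    rw [hm, Ideal.mem_span_singleton'] at hx
    obtain ⟨a, rfl⟩ := hx
    have : σ • (a * π) - u * (a * π) = u * ((σ • a - a) * π) := by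
      rw [smul_mul', ← hu]; ring
    rw [this, sq]
    exact Ideal.mul_mem_left _ _ (Ideal.mul_mem_mul (hσ a) hπm)

lemma R_mem_P {α β : G} (hα : α ∈ RI A G) (hβ : β ∈ RI A G)
    (h : ∀ x ∈ maximalIdeal A, α • x - β • x ∈ maximalIdeal A ^ 2) : α⁻¹ * β ∈ RP A G := by
  refine ⟨(RI A G).mul_mem ((RI A G).inv_mem hα) hβ, fun x hx => ?_⟩
  have h1 := R_smul_mem_pow α⁻¹ 2 (h x hx)
  rw [smul_sub, inv_smul_smul] at h1
  rw [mul_smul, ← neg_sub]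
  exact Ideal.neg_mem_iff _ |>.2 h1

lemma R_scalar_pow {σ : G} {u : A}
    (hu : ∀ x ∈ maximalIdeal A, σ • x - u * x ∈ maximalIdeal A ^ 2) (m : ℕ) :
    ∀ x ∈ maximalIdeal A, σ ^ m • x - u ^ m * x ∈ maximalIdeal A ^ 2 := by
  induction m with
  | zero => intro x _; simp
  | succ m ih =>
    intro x hx
    have h1 := hu _ (R_smul_mem (σ ^ m) hx)
    have h2 := Ideal.mul_mem_left _ u (ih x hx)
    have h3 := Ideal.add_mem _ h1 h2
    rw [pow_succ' σ m, mul_smul]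
    convert h3 using 1
    ring

lemma R_comm [IsDomain A] [IsDiscreteValuationRing A] : ∀ x ∈ RI A G, ∀ y ∈ RI A G,
    x * y * x⁻¹ * y⁻¹ ∈ RP A G := by
  intro σ hσ τ hτ
  obtain ⟨u, -, hu⟩ := R_scalar σ⁻¹ (inv_mem hσ)
  obtain ⟨v, -, hv⟩ := R_scalar τ⁻¹ (inv_mem hτ)
  have h := R_mem_P (α := τ⁻¹ * σ⁻¹) (β := σ⁻¹ * τ⁻¹) (A := A)
    ((RI A G).mul_mem (inv_mem hτ) (inv_mem hσ)) ((RI A G).mul_mem (inv_mem hσ) (inv_mem hτ))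
    (by
      intro x hx
      have h1 := hv _ (R_smul_mem σ⁻¹ hx)
      have h2 := Ideal.mul_mem_left _ v (hu x hx)
      have h3 := hu _ (R_smul_mem τ⁻¹ hx)
      have h4 := Ideal.mul_mem_left _ u (hv x hx)
      have := Ideal.sub_mem _ (Ideal.add_mem _ h1 h2) (Ideal.add_mem _ h3 h4)
      rw [mul_smul, mul_smul]
      convert this using 1
      ring)
  simpa [mul_assoc] using h

lemma R_P_graded {σ : G} (hσ : σ ∈ RP A G) (N : ℕ) : ∀ x ∈ maximalIdeal A ^ N,
    σ • x - x ∈ maximalIdeal A ^ (N + 1) := by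
  induction N with
  | zero => intro x _; simpa using hσ.1 x
  | succ N ih =>
    intro x hx
    rw [pow_succ] at hx
    induction hx using Submodule.mul_induction_on' with
    | mem_mul_mem a ha b hb =>
      have : σ • (a * b) - a * b = (σ • a - a) * (σ • b) + a * (σ • b - b) := by
        rw [smul_mul']; ring
      rw [this]
      refine Ideal.add_mem _ ?_ ?_
      · rw [pow_succ]; exact Ideal.mul_mem_mul (ih a ha) (R_smul_mem σ hb)
      · rw [add_assoc, pow_add]; exact Ideal.mul_mem_mul ha (hσ.2 b hb)
    | add a ha b hb h1 h2 =>
      have : σ • (a + b) - (a + b) = (σ • a - a) + (σ • b - b) := by rw [smul_add]; ring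
      rw [this]; exact Ideal.add_mem _ h1 h2

lemma R_P_torsion [IsNoetherianRing A] [FaithfulSMul G A] {σ : G} (hσ : σ ∈ RP A G) (l : ℕ)
    (hl : IsUnit (l : A)) (hσl : σ ^ l = 1) : σ = 1 := by
  have key : ∀ N : ℕ, ∀ x : A, σ • x - x ∈ maximalIdeal A ^ N := by
    intro N
    induction N with
    | zero => intro x; simp
    | succ N ih =>
      intro x
      have h1 : ∀ i : ℕ, σ ^ i • x - x - i * (σ • x - x) ∈ maximalIdeal A ^ (N + 1) := by
        intro i
        induction i with
        | zero => simp
        | succ i ihi =>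
          have h2 := R_smul_mem_pow σ _ ihi
          have h3 := Ideal.mul_mem_left _ (i : A) (R_P_graded hσ N _ (ih x))
          have h4 := Ideal.add_mem _ h2 h3
          have h5 : σ • (i : A) = i := map_natCast (MulSemiringAction.toRingHom G A σ) i
          convert h4 using 1
          rw [pow_succ', mul_smul, smul_sub, smul_sub, smul_mul', h5, smul_sub]
          push_cast
          ring
      have h2 := h1 l
      rw [hσl, one_smul, sub_self, zero_sub, Ideal.neg_mem_iff] at h2
      exact (Ideal.unit_mul_mem_iff_mem _ hl).1 h2
  refine FaithfulSMul.eq_of_smul_eq_smul (α := A) fun x => ?_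
  rw [one_smul, ← sub_eq_zero]
  have h1 : σ • x - x ∈ (⨅ i : ℕ, maximalIdeal A ^ i) := by
    simp only [Ideal.mem_iInf]; exact fun i => key i x
  rwa [Ideal.iInf_pow_eq_bot_of_isLocalRing _ (maximalIdeal.isMaximal A).ne_top] at h1

lemma R_isPGroup [IsNoetherianRing A] [FaithfulSMul G A] [Finite G] (p : ℕ) [hp : Fact p.Prime]
    (hpA : (p : A) ∈ maximalIdeal A) : IsPGroup p (RP A G) := by
  rw [IsPGroup.iff_card]
  refine ⟨_, Nat.eq_prime_pow_of_unique_prime_dvd Nat.card_pos.ne' ?_⟩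
  intro l hl hd
  by_contra hne
  have := Fact.mk hl
  obtain ⟨x, hx⟩ := exists_prime_orderOf_dvd_card' l hd
  have hcop : IsCoprime (l : ℤ) (p : ℤ) :=
    Nat.isCoprime_iff_coprime.2 ((Nat.coprime_primes hl hp.out).2 hne)
  obtain ⟨a, b, hab⟩ := hcop
  have hu : IsUnit (l : A) := by
    by_contra h
    have h1 : (l : A) ∈ maximalIdeal A := h
    have h2 : (1 : A) = a * l + b * p := by exact_mod_cast congrArg (Int.cast : ℤ → A) hab.symm
    have h3 : (1 : A) ∈ maximalIdeal A := by
      rw [h2]; exact Ideal.add_mem _ (Ideal.mul_mem_left _ _ h1) (Ideal.mul_mem_left _ _ hpA)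
    exact (maximalIdeal.isMaximal A).ne_top ((Ideal.eq_top_iff_one _).2 h3)
  have h1 : (x : G) ^ l = 1 := by
    have := pow_orderOf_eq_one x
    rw [hx] at this
    exact_mod_cast this
  have h2 := R_P_torsion x.2 l hu h1
  have h3 : x = 1 := Subtype.ext h2
  rw [h3, orderOf_one] at hx
  exact hl.one_lt.ne hx

lemma cyc_aux {H : Type*} [Group H] [IsCyclic H] (ρ : G →* H) (D : Subgroup G) :
    ∃ g₀ ∈ D, ∀ g ∈ D, ∃ i : ℤ, ρ (g₀ ^ i * g) = 1 := by
  obtain ⟨⟨y, hy⟩, hgen⟩ := IsCyclic.exists_generator (α := D.map ρ)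
  obtain ⟨g₀, hg₀, rfl⟩ := hy
  refine ⟨g₀, hg₀, fun g hg => ?_⟩
  obtain ⟨i, hi⟩ := hgen ⟨ρ g, g, hg, rfl⟩
  refine ⟨-i, ?_⟩
  have : ρ g₀ ^ i = ρ g := congrArg Subtype.val hi
  rw [map_mul, map_zpow, ← this]; simp

lemma R_mem_RI {σ : G} (h : ∀ y : ResidueField A, σ • y = y) : σ ∈ RI A G := by
  intro x
  have := h (residue A x)
  rw [← ResidueField.residue_smul, ← sub_eq_zero, ← map_sub, residue_eq_zero_iff] at this
  exact this

lemma R_cyc [Finite (ResidueField A)] (p : ℕ) [hp : Fact p.Prime]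
    (hpA : (p : A) ∈ maximalIdeal A) (D : Subgroup G) :
    ∃ g₀ ∈ D, ∀ g ∈ D, ∃ i : ℤ, g₀ ^ i * g ∈ RI A G := by
  have hp0 : (p : ResidueField A) = 0 := by
    rw [← map_natCast (residue A), residue_eq_zero_iff]; exact hpA
  haveI : CharP (ResidueField A) p := (CharP.charP_iff_prime_eq_zero hp.out).2 hp0
  letI : Algebra (ZMod p) (ResidueField A) := ZMod.algebra _ p
  haveI : SMulCommClass G (ZMod p) (ResidueField A) := by
    constructor
    intro g c x
    rw [Algebra.smul_def, Algebra.smul_def, smul_mul']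
    congr 1
    exact RingHom.congr_fun (RingHom.ext_zmod
      ((MulSemiringAction.toRingHom G (ResidueField A) g).comp (algebraMap (ZMod p) _))
      (algebraMap (ZMod p) _)) c
  obtain ⟨g₀, h1, h2⟩ := cyc_aux (MulSemiringAction.toAlgAut G (ZMod p) (ResidueField A)) D
  refine ⟨g₀, h1, fun g hg => ?_⟩
  obtain ⟨i, hi⟩ := h2 g hg
  refine ⟨i, R_mem_RI fun y => ?_⟩
  exact congrArg (fun f : ResidueField A ≃ₐ[ZMod p] ResidueField A => f y) hi

lemma R_prim [IsDomain A] (e : ℕ) (he : IsUnit (e : A)) (ζ : A) (hζ : IsPrimitiveRoot ζ e) :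
    IsPrimitiveRoot (residue A ζ) e := by
  refine ⟨by rw [← map_pow, hζ.pow_eq_one, map_one], fun l hl => ?_⟩
  apply hζ.dvd_of_pow_eq_one
  have h1 : (ζ ^ l) ^ e = 1 := by rw [← pow_mul, mul_comm, pow_mul, hζ.pow_eq_one, one_pow]
  have h2 : (∑ i ∈ Finset.range e, (ζ ^ l) ^ i) * (ζ ^ l - 1) = 0 := by
    rw [geom_sum_mul, h1, sub_self]
  rw [← map_pow] at hl
  have h3 : IsUnit (∑ i ∈ Finset.range e, (ζ ^ l) ^ i) := by
    rw [← residue_ne_zero_iff_isUnit, map_sum]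
    simp only [map_pow (residue A) (ζ ^ l), hl, one_pow]
    have := (residue_ne_zero_iff_isUnit _).2 he
    simpa using this
  rcases mul_eq_zero.1 h2 with h | h
  · exact absurd h h3.ne_zero
  · exact sub_eq_zero.1 h

lemma R_frob [Finite (ResidueField A)] (c : G) : ∃ Q : ℕ, ∀ y : ResidueField A, y ≠ 0 →
    c • y = y ^ (Q + 1) := by
  obtain ⟨g, hg⟩ := IsCyclic.exists_generator (α := (ResidueField A)ˣ)
  have hg' : ∀ x, x ∈ Submonoid.powers g := fun x => by
    rw [mem_powers_iff_mem_zpowers]; exact hg x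
  let f := Units.map (MulSemiringAction.toRingHom G (ResidueField A) c).toMonoidHom
  obtain ⟨q, hq⟩ := hg' (f g * g⁻¹)
  have hq' : f g = g ^ (q + 1) := by
    have : g ^ q = f g * g⁻¹ := hq
    rw [pow_succ, this, inv_mul_cancel_right]
  refine ⟨q, fun y hy => ?_⟩
  obtain ⟨i, hi⟩ := hg' (Units.mk0 y hy)
  have hi' : g ^ i = Units.mk0 y hy := hi
  have h1 : f (Units.mk0 y hy) = (Units.mk0 y hy) ^ (q + 1) := by
    rw [← hi', map_pow, hq', ← pow_mul, ← pow_mul, mul_comm]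
  have := congrArg Units.val h1
  simpa [f] using this

lemma R_CI [IsDomain A] [IsDiscreteValuationRing A] [Finite (ResidueField A)] (e : ℕ)
    (he : IsUnit (e : A)) (ζ : A) (hζ : IsPrimitiveRoot ζ e) (c : G) (hc : c • ζ = ζ)
    (x : G) (hx : x ∈ RI A G) :
    ∃ j : ℕ, ∃ y ∈ RP A G, c * x * c⁻¹ * x⁻¹ = x ^ (e * j) * y := by
  obtain ⟨Q, hQ⟩ := R_frob (A := A) c
  have hz := R_prim e he ζ hζ
  have hζu : IsUnit ζ := by
    refine IsUnit.of_pow_eq_one hζ.pow_eq_one ?_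
    rintro rfl
    simp at he
  have hd : e ∣ Q := by
    apply hz.dvd_of_pow_eq_one
    have h0 := (residue_ne_zero_iff_isUnit ζ).2 hζu
    have h1 := hQ (residue A ζ) h0
    rw [← ResidueField.residue_smul, hc, pow_succ] at h1
    exact (mul_right_cancel₀ h0 (by rw [← h1, one_mul]))
  obtain ⟨j, rfl⟩ := hd
  obtain ⟨u, hu, hu'⟩ := R_scalar x hx
  have hcu : c • u - u ^ (e * j + 1) ∈ maximalIdeal A := by
    rw [← residue_eq_zero_iff, map_sub, ResidueField.residue_smul, hQ _
      ((residue_ne_zero_iff_isUnit u).2 hu), map_pow, sub_self]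
  refine ⟨j, (x ^ (e * j))⁻¹ * (c * x * c⁻¹ * x⁻¹), ?_, by group⟩
  apply R_mem_P ((RI A G).pow_mem hx _)
    ((RI A G).mul_mem (RI_normal.conj_mem x hx c) ((RI A G).inv_mem hx))
  intro w hw
  obtain ⟨z, hz', rfl⟩ : ∃ z ∈ maximalIdeal A, w = x • z :=
    ⟨x⁻¹ • w, R_smul_mem _ hw, by rw [smul_inv_smul]⟩
  have h1 := R_scalar_pow hu' (e * j + 1) z hz'
  have h2 := R_smul_mem_pow c 2 (hu' _ (R_smul_mem c⁻¹ hz'))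
  have h3 : (c • u - u ^ (e * j + 1)) * z ∈ maximalIdeal A ^ 2 := by
    rw [sq]; exact Ideal.mul_mem_mul hcu hz'
  have h4 := Ideal.sub_mem _ h1 (Ideal.add_mem _ h2 h3)
  rw [smul_sub, smul_mul', smul_inv_smul] at h4
  have e1 : (c * x * c⁻¹ * x⁻¹) • x • z = c • x • c⁻¹ • z := by
    simp [mul_smul]
  have e2 : x ^ (e * j) • x • z = x ^ (e * j + 1) • z := by
    rw [pow_succ, mul_smul]
  rw [e1, e2]
  convert h4 using 1
  ring

end Ramification
section LF
open scoped NormedField Valued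
open IsLocalRing


lemma dvrO (M : Type*) [NontriviallyNormedField M] [IsUltrametricDist M] [ProperSpace M] :
    IsDiscreteValuationRing 𝒪[M] ∧ Finite (ResidueField 𝒪[M]) := by
  haveI : CompactSpace 𝒪[M] := by
    refine isCompact_iff_compactSpace (s := ((𝒪[M] : Subring M) : Set M)).1 ?_
    have : ((𝒪[M] : Subring M) : Set M) = Metric.closedBall 0 1 := by
      ext x; simp [Valued.integer.mem_iff]
    rw [this]
    exact isCompact_closedBall 0 1
  have r : (Valued.v : Valuation M NNReal).RankOne :=
    inferInstanceAs (Valuation.RankOne (NormedField.valuation (K := M)))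
  have h := (@Valued.integer.compactSpace_iff_completeSpace_and_isDiscreteValuationRing_and_finite_residueField M NNReal _ _ _ r).1 inferInstance
  exact h.2

lemma ramN (p n : ℕ) [hp : Fact p.Prime] (hn : 1 ≤ n) {M : Type*}
    [NontriviallyNormedField M] [IsUltrametricDist M] [ProperSpace M] [NormedAlgebra ℚ_[p] M]
    {G : Type*} [Group G] [Finite G] [MulSemiringAction G M]
    [FaithfulSMul G M] (hiso : ∀ (g : G) (x : M), ‖g • x‖ = ‖x‖)
    (ζ : M) (hζ : IsPrimitiveRoot ζ (p ^ n - 1)) :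
    ∃ P I : Subgroup G, P.Normal ∧ I.Normal ∧ IsPGroup p P ∧
      (∀ x ∈ I, ∀ y ∈ I, x * y * x⁻¹ * y⁻¹ ∈ P) ∧
      (∀ D : Subgroup G, ∃ g₀ ∈ D, ∀ g ∈ D, ∃ i : ℤ, g₀ ^ i * g ∈ I) ∧
      (∀ c : G, c • ζ = ζ → ∀ x ∈ I, ∃ j : ℕ, ∃ y ∈ P,
        c * x * c⁻¹ * x⁻¹ = x ^ ((p ^ n - 1) * j) * y) := by
  obtain ⟨_, _⟩ := dvrO M
  letI : MulSemiringAction G 𝒪[M] :=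
    { smul := fun g x => ⟨g • (x : M), by
        rw [Valued.integer.mem_iff, hiso]; exact Valued.integer.mem_iff.1 x.2⟩
      one_smul := fun x => Subtype.ext (one_smul G (x : M))
      mul_smul := fun g h x => Subtype.ext (mul_smul g h (x : M))
      smul_zero := fun g => Subtype.ext (smul_zero g)
      smul_add := fun g x y => Subtype.ext (smul_add g (x : M) y)
      smul_one := fun g => Subtype.ext (smul_one g)
      smul_mul := fun g x y => Subtype.ext (smul_mul' g (x : M) y) }
  have hcoe : ∀ (g : G) (x : 𝒪[M]), ((g • x : 𝒪[M]) : M) = g • (x : M) := fun _ _ => rfl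
  haveI : FaithfulSMul G 𝒪[M] := by
    constructor
    intro g h hgh
    apply FaithfulSMul.eq_of_smul_eq_smul (α := M)
    have hin : ∀ x : M, ‖x‖ ≤ 1 → g • x = h • x := fun x hx =>
      congrArg Subtype.val (hgh ⟨x, Valued.integer.mem_iff.2 hx⟩)
    intro x
    rcases le_total ‖x‖ 1 with hx | hx
    · exact hin x hx
    · have h1 := hin x⁻¹ (by rw [norm_inv]; exact inv_le_one_of_one_le₀ hx)
      rw [smul_inv'', smul_inv''] at h1
      exact inv_injective h1
  have hpA : (p : 𝒪[M]) ∈ maximalIdeal 𝒪[M] := by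
    rw [mem_maximalIdeal, mem_nonunits_iff, Valued.integer.isUnit_iff_norm_eq_one]
    have h1 : ‖(p : 𝒪[M])‖ = ‖algebraMap ℚ_[p] M p‖ := by
      rw [map_natCast]; rfl
    rw [h1, norm_algebraMap']
    exact (Padic.norm_p_lt_one).ne
  have hpn : 1 ≤ p ^ n := Nat.one_le_pow _ _ hp.out.pos
  have he : IsUnit ((p ^ n - 1 : ℕ) : 𝒪[M]) := by
    by_contra h
    have h1 : ((p ^ n - 1 : ℕ) : 𝒪[M]) ∈ maximalIdeal 𝒪[M] := h
    have h2 : (p : 𝒪[M]) ^ n ∈ maximalIdeal 𝒪[M] := Ideal.pow_mem_of_mem _ hpA n hn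
    have h3 := Ideal.sub_mem _ h2 h1
    rw [Nat.cast_sub hpn] at h3
    push_cast at h3
    rw [sub_sub_cancel] at h3
    exact (maximalIdeal.isMaximal 𝒪[M]).ne_top ((Ideal.eq_top_iff_one _).2 h3)
  have hne : p ^ n - 1 ≠ 0 := by
    have : 1 < p ^ n := Nat.one_lt_pow (by omega) hp.out.one_lt
    omega
  have hζn : ‖ζ‖ = 1 := by
    have := congrArg norm hζ.pow_eq_one
    rw [norm_pow, norm_one] at this
    exact (pow_eq_one_iff_of_nonneg (norm_nonneg _) hne).1 this
  let z : 𝒪[M] := ⟨ζ, Valued.integer.mem_iff.2 hζn.le⟩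
  have hz : IsPrimitiveRoot z (p ^ n - 1) :=
    IsPrimitiveRoot.of_map_of_injective (f := (𝒪[M]).subtype) hζ Subtype.val_injective
  exact ⟨RP 𝒪[M] G, RI 𝒪[M] G, inferInstance, inferInstance, R_isPGroup p hpA, R_comm,
    fun D => R_cyc p hpA D,
    fun c hc x hx => R_CI _ he z hz c (Subtype.ext hc) x hx⟩

lemma ramG (p n : ℕ) [hp : Fact p.Prime] (hn : 1 ≤ n) {M : Type*} [Field M] [Algebra ℚ_[p] M]
    [FiniteDimensional ℚ_[p] M] {G : Type*} [Group G] [Finite G] [MulSemiringAction G M]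
    [SMulCommClass G ℚ_[p] M] [FaithfulSMul G M] (ζ : M) (hζ : IsPrimitiveRoot ζ (p ^ n - 1)) :
    ∃ P I : Subgroup G, P.Normal ∧ I.Normal ∧ IsPGroup p P ∧
      (∀ x ∈ I, ∀ y ∈ I, x * y * x⁻¹ * y⁻¹ ∈ P) ∧
      (∀ D : Subgroup G, ∃ g₀ ∈ D, ∀ g ∈ D, ∃ i : ℤ, g₀ ^ i * g ∈ I) ∧
      (∀ c : G, c • ζ = ζ → ∀ x ∈ I, ∃ j : ℕ, ∃ y ∈ P,
        c * x * c⁻¹ * x⁻¹ = x ^ ((p ^ n - 1) * j) * y) := by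
  letI iN : NontriviallyNormedField M := spectralNorm.nontriviallyNormedField ℚ_[p] M
  letI : NormedAlgebra ℚ_[p] M := spectralNorm.normedAlgebra ℚ_[p] M
  haveI : IsUltrametricDist M := IsUltrametricDist.of_normedAlgebra ℚ_[p]
  haveI : ProperSpace M := FiniteDimensional.proper ℚ_[p] M
  have hiso : ∀ (g : G) (x : M), ‖g • x‖ = ‖x‖ := fun g x =>
    (spectralNorm_eq_of_equiv (K := ℚ_[p]) (MulSemiringAction.toAlgEquiv ℚ_[p] M g) x).symm
  exact ramN p n hn hiso ζ hζ
end LF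

lemma exists_prim_padic (p : ℕ) [hp : Fact p.Prime] : ∃ z : ℤ_[p], IsPrimitiveRoot z (p - 1) := by
  obtain ⟨g, hg⟩ := IsCyclic.exists_generator (α := (ZMod p)ˣ)
  have hord : orderOf g = p - 1 := by
    rw [orderOf_eq_card_of_forall_mem_zpowers hg, Nat.card_eq_fintype_card, ZMod.card_units]
  obtain ⟨a, ha⟩ := ZMod.ringHom_surjective (PadicInt.toZMod (p := p)) (g : ZMod p)
  have hker : ∀ x : ℤ_[p], PadicInt.toZMod x = 0 ↔ x ∈ IsLocalRing.maximalIdeal ℤ_[p] := by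
    intro x; rw [← PadicInt.ker_toZMod, RingHom.mem_ker]
  haveI : HenselianLocalRing ℤ_[p] :=
    { is_henselian := fun f hf a h1 h2 =>
        HenselianRing.is_henselian (I := IsLocalRing.maximalIdeal ℤ_[p]) f hf a h1 (h2.map _) }
  have hp1 : p - 1 ≠ 0 := by have := hp.out.two_le; omega
  have hg1 : (g : ZMod p) ^ (p - 1) = 1 := by
    rw [← Units.val_pow_eq_pow_val, ← hord, pow_orderOf_eq_one, Units.val_one]
  obtain ⟨z, hz, hza⟩ := HenselianLocalRing.is_henselian (R := ℤ_[p])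
    (Polynomial.X ^ (p - 1) - 1 : Polynomial ℤ_[p]) (Polynomial.monic_X_pow_sub_C 1 hp1) a
    (by rw [← hker]; simp [ha, hg1])
    (by
      rw [← not_not (a := IsUnit _), ← mem_nonunits_iff, ← IsLocalRing.mem_maximalIdeal, ← hker]
      have hpp : ((p - 1 : ℕ) : ZMod p) ≠ 0 := by
        rw [Nat.cast_sub hp.out.one_le]; simp
      have hd : Polynomial.eval a (Polynomial.derivative (Polynomial.X ^ (p - 1) - 1 : Polynomial ℤ_[p])) = ((p - 1 : ℕ) : ℤ_[p]) * a ^ (p - 1 - 1) := by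
        rw [Polynomial.derivative_sub, Polynomial.derivative_X_pow, Polynomial.derivative_one]
        simp
      rw [hd, map_mul, map_natCast, map_pow, ha]
      exact mul_ne_zero hpp (pow_ne_zero _ g.ne_zero))
  rw [Polynomial.IsRoot.def] at hz
  have hz1 : z ^ (p - 1) = 1 := by simpa [sub_eq_zero] using hz
  have hzg : PadicInt.toZMod z = g := by
    rw [← hker, map_sub, sub_eq_zero, ha] at hza; exact hza
  refine ⟨z, hz1, fun l hl => ?_⟩
  rw [← hord]
  apply orderOf_dvd_of_pow_eq_one
  ext
  rw [Units.val_pow_eq_pow_val, ← hzg, ← map_pow, hl, map_one, Units.val_one]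

lemma prim_mem_padic (p : ℕ) [hp : Fact p.Prime] {M : Type*} [Field M] [Algebra ℚ_[p] M] (ζ : M)
    (hζ : IsPrimitiveRoot ζ (p - 1)) : ∃ z : ℚ_[p], algebraMap ℚ_[p] M z = ζ := by
  obtain ⟨z, hz⟩ := exists_prim_padic p
  have hp1 : p - 1 ≠ 0 := by have := hp.out.two_le; omega
  have hz1 : IsPrimitiveRoot (z : ℚ_[p]) (p - 1) :=
    hz.map_of_injective (f := PadicInt.Coe.ringHom) Subtype.val_injective
  have hz2 := hz1.map_of_injective (f := algebraMap ℚ_[p] M) (algebraMap ℚ_[p] M).injective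
  haveI : NeZero (p - 1) := ⟨hp1⟩
  obtain ⟨i, -, hi⟩ := hz2.eq_pow_of_pow_eq_one hζ.pow_eq_one
  exact ⟨(z : ℚ_[p]) ^ i, by rw [map_pow, hi]⟩

section Kummer

open IntermediateField

variable {k M : Type*} [Field k] [Field M] [Algebra k M]

/-- the Kummer field inside `M` -/
def KF (k : Type*) {M : Type*} [Field k] [Field M] [Algebra k M] (ζ : M) (e : ℕ) :
    IntermediateField k M := adjoin k {x : M | x = ζ ∨ x ^ e ∈ adjoin k {ζ}}

lemma mem_fix_adjoin (S : Set M) (σ : M ≃ₐ[k] M) (h : ∀ x ∈ S, σ x = x) :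
    σ ∈ (adjoin k S).fixingSubgroup := by
  refine (IntermediateField.mem_fixingSubgroup_iff _ _).2 ?_
  intro x hx
  induction hx using adjoin_induction with
  | mem x hx => exact h x hx
  | algebraMap x => exact σ.commutes x
  | add x y _ _ h1 h2 => rw [map_add, h1, h2]
  | inv x _ h1 => rw [map_inv₀, h1]
  | mul x y _ _ h1 h2 => rw [map_mul, h1, h2]

lemma mem_C {ζ : M} {σ : M ≃ₐ[k] M} : σ ∈ (adjoin k {ζ}).fixingSubgroup ↔ σ ζ = ζ := by
  constructor
  · intro h
    exact (IntermediateField.mem_fixingSubgroup_iff _ _).1 h ζ (mem_adjoin_simple_self k ζ)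
  · intro h
    exact mem_fix_adjoin _ _ (by rintro x rfl; exact h)

lemma C_comm {ζ : M} {e : ℕ} [NeZero e] (hζ : IsPrimitiveRoot ζ e) (g h : M ≃ₐ[k] M) :
    g * h * g⁻¹ * h⁻¹ ∈ (adjoin k {ζ}).fixingSubgroup := by
  have hpow : ∀ σ : M ≃ₐ[k] M, ∃ i : ℕ, σ ζ = ζ ^ i := by
    intro σ
    have : (σ ζ) ^ e = 1 := by rw [← map_pow, hζ.pow_eq_one, map_one]
    obtain ⟨i, -, hi⟩ := hζ.eq_pow_of_pow_eq_one this
    exact ⟨i, hi.symm⟩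
  rw [mem_C]
  obtain ⟨i, hi⟩ := hpow g⁻¹
  obtain ⟨j, hj⟩ := hpow h⁻¹
  have h1 : g⁻¹ (h⁻¹ ζ) = h⁻¹ (g⁻¹ ζ) := by
    rw [hi, hj, map_pow, map_pow, hi, hj, ← pow_mul, ← pow_mul, mul_comm]
  change g (h (g⁻¹ (h⁻¹ ζ))) = ζ
  rw [h1]
  change g ((h * h⁻¹) (g⁻¹ ζ)) = ζ
  rw [mul_inv_cancel]
  change (g * g⁻¹) ζ = ζ
  rw [mul_inv_cancel]; rfl

lemma C_normal {ζ : M} {e : ℕ} [NeZero e] (hζ : IsPrimitiveRoot ζ e) :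
    (adjoin k {ζ}).fixingSubgroup.Normal := by
  constructor
  intro c hc g
  have := Subgroup.mul_mem _ (C_comm hζ g c) hc
  simpa using this

variable [FiniteDimensional k M] [IsGalois k M]

lemma mem_Kn_iff {ζ x : M} : x ∈ adjoin k {ζ} ↔ ∀ c : M ≃ₐ[k] M, c ζ = ζ → c x = x := by
  constructor
  · intro hx c hc
    exact (IntermediateField.mem_fixingSubgroup_iff _ _).1 (mem_C.2 hc) x hx
  · intro h
    rw [← IsGalois.fixedField_fixingSubgroup (adjoin k {ζ}), mem_fixedField_iff]
    intro c hc
    exact h c (mem_C.1 hc)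

lemma gens_stable {ζ x : M} {e : ℕ} [NeZero e] (hζ : IsPrimitiveRoot ζ e)
    (hx : x ^ e ∈ adjoin k {ζ}) (g : M ≃ₐ[k] M) : (g x) ^ e ∈ adjoin k {ζ} := by
  have hC := C_normal (k := k) hζ
  rw [mem_Kn_iff] at hx ⊢
  intro c hc
  rw [← map_pow]
  have h1 := hx _ (mem_C.1 (hC.conj_mem c (mem_C.2 hc) g⁻¹))
  rw [inv_inv] at h1
  have h2 : g ((g⁻¹ * c * g) (x ^ e)) = c (g (x ^ e)) := by
    change (g * (g⁻¹ * c * g)) (x ^ e) = (c * g) (x ^ e)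
    congr 1
    group
  rw [← h2, h1]

lemma KF_normal {ζ : M} {e : ℕ} [NeZero e] (hζ : IsPrimitiveRoot ζ e) :
    (KF k ζ e).fixingSubgroup.Normal := by
  constructor
  intro σ hσ g
  apply mem_fix_adjoin
  intro x hx
  have h1 : g⁻¹ x ∈ KF k ζ e := by
    apply subset_adjoin
    right
    apply gens_stable hζ
    rcases hx with rfl | hx
    · rw [hζ.pow_eq_one]; exact one_mem _
    · exact hx
  have h2 : σ (g⁻¹ x) = g⁻¹ x := (IntermediateField.mem_fixingSubgroup_iff _ _).1 hσ _ h1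
  change g (σ (g⁻¹ x)) = x
  rw [h2]
  change (g * g⁻¹) x = x
  rw [mul_inv_cancel]; rfl

lemma gens_eig {ζ x : M} {e : ℕ} [NeZero e] (hζ : IsPrimitiveRoot ζ e)
    (hx : x ^ e ∈ adjoin k {ζ}) (c : M ≃ₐ[k] M) (hc : c ζ = ζ) : ∃ i : ℕ, c x = ζ ^ i * x := by
  by_cases h0 : x = 0
  · exact ⟨0, by simp [h0]⟩
  · have h1 : (c x / x) ^ e = 1 := by
      rw [div_pow, ← map_pow, mem_Kn_iff.1 hx c hc, div_self (pow_ne_zero _ h0)]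
    obtain ⟨i, -, hi⟩ := hζ.eq_pow_of_pow_eq_one h1
    exact ⟨i, by rw [hi, div_mul_cancel₀ _ h0]⟩

lemma KF_le_C {ζ : M} {e : ℕ} : (KF k ζ e).fixingSubgroup ≤ (adjoin k {ζ}).fixingSubgroup := by
  intro σ hσ
  rw [mem_C]
  exact (IntermediateField.mem_fixingSubgroup_iff _ _).1 hσ ζ (subset_adjoin _ _ (Or.inl rfl))

lemma KF_comm {ζ : M} {e : ℕ} [NeZero e] (hζ : IsPrimitiveRoot ζ e) (c d : M ≃ₐ[k] M)
    (hc : c ζ = ζ) (hd : d ζ = ζ) : c * d * c⁻¹ * d⁻¹ ∈ (KF k ζ e).fixingSubgroup := by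
  apply mem_fix_adjoin
  intro x hx
  have hx' : x ^ e ∈ adjoin k {ζ} := by
    rcases hx with rfl | hx
    · rw [hζ.pow_eq_one]; exact one_mem _
    · exact hx
  have hc' : c⁻¹ ζ = ζ := by
    rw [← mem_C (k := k)] at hc ⊢; exact inv_mem hc
  have hd' : d⁻¹ ζ = ζ := by
    rw [← mem_C (k := k)] at hd ⊢; exact inv_mem hd
  obtain ⟨i, hi⟩ := gens_eig hζ hx' c⁻¹ hc'
  obtain ⟨j, hj⟩ := gens_eig hζ hx' d⁻¹ hd'
  have h1 : c⁻¹ (d⁻¹ x) = d⁻¹ (c⁻¹ x) := by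
    rw [hi, hj, map_mul, map_mul, map_pow, map_pow, hi, hj, hc', hd']; ring
  change c (d (c⁻¹ (d⁻¹ x))) = x
  rw [h1]
  change c ((d * d⁻¹) (c⁻¹ x)) = x
  rw [mul_inv_cancel]
  change (c * c⁻¹) x = x
  rw [mul_inv_cancel]; rfl

lemma pow_eig {ζ x : M} (c : M ≃ₐ[k] M) (hc : c ζ = ζ) (i : ℕ) (hi : c x = ζ ^ i * x) (m : ℕ) :
    (c ^ m) x = (ζ ^ i) ^ m * x := by
  induction m with
  | zero => simp
  | succ m ih =>
    rw [pow_succ' c]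
    change c ((c ^ m) x) = _
    rw [ih, map_mul, map_pow, map_pow, hc, hi]; ring

lemma KF_pow {ζ : M} {e : ℕ} [NeZero e] (hζ : IsPrimitiveRoot ζ e) (c : M ≃ₐ[k] M)
    (hc : c ζ = ζ) : c ^ e ∈ (KF k ζ e).fixingSubgroup := by
  apply mem_fix_adjoin
  intro x hx
  have hx' : x ^ e ∈ adjoin k {ζ} := by
    rcases hx with rfl | hx
    · rw [hζ.pow_eq_one]; exact one_mem _
    · exact hx
  obtain ⟨i, hi⟩ := gens_eig hζ hx' c hc
  rw [pow_eig c hc i hi, ← pow_mul, mul_comm i, pow_mul, hζ.pow_eq_one, one_pow, one_mul]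

/-- eigen-decomposition for one automorphism -/
lemma eig_decomp [CharZero M] {ζ x : M} {e : ℕ} [NeZero e] (hζ : IsPrimitiveRoot ζ e)
    (c : M ≃ₐ[k] M) (hc : c ζ = ζ) (hx : (c ^ e) x = x) :
    x = ∑ i ∈ Finset.range e, ∑ j ∈ Finset.range e, (e : M)⁻¹ * ζ ^ (i * j) * (c ^ j) x := by
  have he : (e : M) ≠ 0 := Nat.cast_ne_zero.2 (NeZero.ne e)
  rw [Finset.sum_comm]
  have h1 : ∀ j ∈ Finset.range e, j ≠ 0 →
      ∑ i ∈ Finset.range e, (e : M)⁻¹ * ζ ^ (i * j) * (c ^ j) x = 0 := by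
    intro j hj hj0
    rw [← Finset.sum_mul, ← Finset.mul_sum]
    have h2 : ∑ i ∈ Finset.range e, ζ ^ (i * j) = 0 := by
      have h3 : (∑ i ∈ Finset.range e, (ζ ^ j) ^ i) * (ζ ^ j - 1) = 0 := by
        rw [geom_sum_mul, ← pow_mul, mul_comm, pow_mul, hζ.pow_eq_one, one_pow, sub_self]
      have h4 : ζ ^ j - 1 ≠ 0 :=
        sub_ne_zero.2 (hζ.pow_ne_one_of_pos_of_lt hj0 (Finset.mem_range.1 hj))
      have h5 := (mul_eq_zero.1 h3).resolve_right h4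
      rw [← h5]
      exact Finset.sum_congr rfl fun i _ => by rw [← pow_mul, mul_comm]
    rw [h2]; simp
  rw [Finset.sum_eq_single 0 h1]
  · simp [he]
  · intro h
    exact absurd (Finset.mem_range.2 (Nat.pos_of_ne_zero (NeZero.ne e))) h

lemma eig_comp {ζ x : M} {e : ℕ} [NeZero e] (hζ : IsPrimitiveRoot ζ e)
    (c : M ≃ₐ[k] M) (hc : c ζ = ζ) (hx : (c ^ e) x = x) (i : ℕ) (hi : i < e) :
    c (∑ j ∈ Finset.range e, (e : M)⁻¹ * ζ ^ (i * j) * (c ^ j) x) =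
      ζ ^ (e - i) * ∑ j ∈ Finset.range e, (e : M)⁻¹ * ζ ^ (i * j) * (c ^ j) x := by
  have hζ0 : ζ ≠ 0 := hζ.ne_zero (NeZero.ne e)
  have h0 : ζ ^ (e - i) * ζ ^ i = 1 := by
    rw [← pow_add, Nat.sub_add_cancel hi.le, hζ.pow_eq_one]
  let f : ℕ → M := fun j => (e : M)⁻¹ * ζ ^ (i * j) * (c ^ j) x
  have h1 : ∀ j, c (f j) = ζ ^ (e - i) * f (j + 1) := by
    intro j
    simp only [f, map_mul, map_inv₀, map_natCast, map_pow, hc]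
    rw [pow_succ' c]
    change (e : M)⁻¹ * ζ ^ (i * j) * c ((c ^ j) x) =
      ζ ^ (e - i) * ((e : M)⁻¹ * ζ ^ (i * (j + 1)) * c ((c ^ j) x))
    rw [mul_add, mul_one, pow_add]
    linear_combination -((e : M)⁻¹ * ζ ^ (i * j) * c ((c ^ j) x)) * h0
  change c (∑ j ∈ Finset.range e, f j) = ζ ^ (e - i) * ∑ j ∈ Finset.range e, f j
  rw [map_sum, Finset.sum_congr rfl fun j _ => h1 j, ← Finset.mul_sum]
  congr 1
  have h2 : f e = f 0 := by
    simp only [f]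
    rw [hx, mul_comm i, pow_mul, hζ.pow_eq_one]; simp
  have h3 := Finset.sum_range_succ f e
  rw [Finset.sum_range_succ', h2] at h3
  exact add_right_cancel h3

lemma kummer [CharZero M] {ζ : M} {e : ℕ} [NeZero e] (hζ : IsPrimitiveRoot ζ e)
    (X : Subgroup (M ≃ₐ[k] M))
    (h1 : ∀ c ∈ (adjoin k {ζ}).fixingSubgroup, ∀ d ∈ (adjoin k {ζ}).fixingSubgroup,
      c * d * c⁻¹ * d⁻¹ ∈ X)
    (h2 : ∀ c ∈ (adjoin k {ζ}).fixingSubgroup, c ^ e ∈ X) :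
    (KF k ζ e).fixingSubgroup ≤ X := by
  classical
  obtain ⟨C, hC⟩ : ∃ C, C = (adjoin k {ζ}).fixingSubgroup := ⟨_, rfl⟩
  rw [← hC] at h1 h2
  have hCζ : ∀ c ∈ C, c ζ = ζ := fun c hc => mem_C.1 (hC ▸ hc)
  have hcomm : ∀ c ∈ C, ∀ d ∈ C, ∀ x ∈ fixedField (X ⊓ C), c (d x) = d (c x) := by
    intro c hc d hd x hx
    have h3 : (c⁻¹ * d⁻¹ * c * d) x = x := by
      rw [mem_fixedField_iff] at hx
      refine hx _ ⟨?_, ?_⟩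
      · simpa using h1 c⁻¹ (inv_mem hc) d⁻¹ (inv_mem hd)
      · exact C.mul_mem (mul_mem (mul_mem (inv_mem hc) (inv_mem hd)) hc) hd
    have h4 : d (c ((c⁻¹ * d⁻¹ * c * d) x)) = c (d x) := by
      change (d * c * (c⁻¹ * d⁻¹ * c * d)) x = (c * d) x
      congr 1
      group
    rw [← h4, h3]
  have hstab : ∀ c ∈ C, ∀ x ∈ fixedField (X ⊓ C), c x ∈ fixedField (X ⊓ C) := by
    intro c hc x hx
    rw [mem_fixedField_iff] at hx ⊢
    intro y hy
    have h3 : (c⁻¹ * y * c) x = x := by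
      refine hx _ ⟨?_, C.mul_mem (mul_mem (inv_mem hc) hy.2) hc⟩
      have := X.mul_mem (h1 c⁻¹ (inv_mem hc) y hy.2) hy.1
      simpa using this
    have h4 : c ((c⁻¹ * y * c) x) = y (c x) := by
      change (c * (c⁻¹ * y * c)) x = (y * c) x
      congr 1
      group
    rw [← h4, h3]
  have hpw : ∀ c ∈ C, ∀ x ∈ fixedField (X ⊓ C), (c ^ e) x = x := by
    intro c hc x hx
    rw [mem_fixedField_iff] at hx
    exact hx _ ⟨h2 c hc, pow_mem hc e⟩
  have hζL : ζ ∈ fixedField (X ⊓ C) := by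
    rw [mem_fixedField_iff]; intro y hy; exact hCζ y hy.2
  have hstabpow : ∀ c ∈ C, ∀ j : ℕ, ∀ x ∈ fixedField (X ⊓ C), (c ^ j) x ∈ fixedField (X ⊓ C) :=
    fun c hc j x hx => hstab _ (pow_mem hc j) x hx
  have key : ∀ T : Finset (M ≃ₐ[k] M), (∀ c ∈ T, c ∈ C) → ∀ x ∈ fixedField (X ⊓ C),
      x ∈ AddSubmonoid.closure {y : M | y ∈ fixedField (X ⊓ C) ∧
        ∀ c ∈ T, ∃ i : ℕ, c y = ζ ^ i * y} := by
    intro T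
    induction T using Finset.induction_on with
    | empty =>
      intro _ x hx
      exact AddSubmonoid.subset_closure ⟨hx, by simp⟩
    | insert c T hcT ih =>
      intro hT x hx
      have hcC : c ∈ C := hT c (Finset.mem_insert_self c T)
      have h3 := ih (fun d hd => hT d (Finset.mem_insert_of_mem hd)) x hx
      refine AddSubmonoid.closure_le.2 ?_ h3
      rintro y ⟨hy, hyT⟩
      have h4 := eig_decomp hζ c (hCζ c hcC) (hpw c hcC y hy)
      rw [SetLike.mem_coe, h4]
      refine AddSubmonoid.sum_mem _ fun i hi => AddSubmonoid.subset_closure ⟨?_, ?_⟩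
      · refine sum_mem fun j _ => mul_mem (mul_mem (inv_mem (_root_.natCast_mem _ e)) (pow_mem hζL _))
          (hstabpow c hcC j y hy)
      · intro d hd
        rcases Finset.mem_insert.1 hd with rfl | hd
        · exact ⟨_, eig_comp hζ d (hCζ d hcC) (hpw d hcC y hy) i (Finset.mem_range.1 hi)⟩
        · obtain ⟨m, hm⟩ := hyT d hd
          have hdC : d ∈ C := hT d (Finset.mem_insert_of_mem hd)
          refine ⟨m, ?_⟩
          rw [map_sum, Finset.mul_sum]
          refine Finset.sum_congr rfl fun j _ => ?_
          rw [map_mul, map_mul, map_inv₀, map_natCast, map_pow, hCζ d hdC,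
            hcomm d hdC _ (pow_mem hcC j) y hy, hm, map_mul, map_pow,
            hCζ _ (pow_mem hcC j)]
          ring
  have hle : fixedField (X ⊓ C) ≤ KF k ζ e := by
    intro x hx
    have : Finite (M ≃ₐ[k] M) := inferInstance
    have := Fintype.ofFinite (M ≃ₐ[k] M)
    have h3 := key (Finset.univ.filter (· ∈ C)) (fun c hc => (Finset.mem_filter.1 hc).2) x hx
    refine (AddSubmonoid.closure_le (S := (KF k ζ e).toSubfield.toAddSubgroup.toAddSubmonoid)).2
      ?_ h3
    rintro y ⟨hy, hyC⟩
    refine subset_adjoin k _ (Or.inr ?_)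
    rw [mem_Kn_iff]
    intro c hc
    have hcC : c ∈ C := by rw [hC]; exact mem_C.2 hc
    obtain ⟨i, hi⟩ := hyC c (Finset.mem_filter.2 ⟨Finset.mem_univ _, hcC⟩)
    rw [map_pow, hi, mul_pow, ← pow_mul, mul_comm i, pow_mul, hζ.pow_eq_one, one_pow, one_mul]
  have h5 := fixingSubgroup_le hle
  rw [fixingSubgroup_fixedField] at h5
  exact h5.trans inf_le_left

end Kummer

section Final

open IntermediateField

lemma coatom_of_prim {k M : Type*} [Field k] [Field M] [Algebra k M] [FiniteDimensional k M]
    [IsGalois k M] (E : IntermediateField k M) (h1 : Module.finrank k E ≠ 1)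
    (hprim : ∀ F : IntermediateField k M, F ≤ E → F = ⊥ ∨ F = E) :
    IsCoatom E.fixingSubgroup := by
  have hat : IsAtom E := by
    constructor
    · rintro rfl
      exact h1 (IntermediateField.finrank_bot)
    · intro F hF
      exact (hprim F hF.le).resolve_right hF.ne
  have := (OrderIso.isAtom_iff (IsGalois.intermediateFieldEquivSubgroup (F := k) (E := M)) E).2 hat
  exact this

lemma main_finite (p n : ℕ) [hp : Fact p.Prime] (hn : 1 ≤ n) {k M : Type*} [Field k] [Field M]
    [Algebra k M] [Algebra ℚ_[p] k] [Algebra ℚ_[p] M] [IsScalarTower ℚ_[p] k M]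
    [FiniteDimensional ℚ_[p] M] [FiniteDimensional k M] [IsGalois k M]
    (ζ : M) (hζ : IsPrimitiveRoot ζ (p ^ n - 1)) (E E' : IntermediateField k M)
    (hE : Module.finrank k E = p ^ n) (hE' : Module.finrank k E' = p ^ n)
    (hprim : ∀ F : IntermediateField k M, F ≤ E → F = ⊥ ∨ F = E)
    (hprim' : ∀ F : IntermediateField k M, F ≤ E' → F = ⊥ ∨ F = E')
    (hcomp : E ⊔ KF k ζ (p ^ n - 1) = E' ⊔ KF k ζ (p ^ n - 1)) : Nonempty (E ≃ₐ[k] E') := by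
  have h1 : 1 < p ^ n := Nat.one_lt_pow (by omega) hp.out.one_lt
  haveI : NeZero (p ^ n - 1) := ⟨by omega⟩
  haveI : CharZero M := charZero_of_injective_algebraMap (algebraMap ℚ_[p] M).injective
  haveI : SMulCommClass (M ≃ₐ[k] M) ℚ_[p] M := by
    constructor
    intro g q x
    rw [← algebraMap_smul k q x, ← algebraMap_smul k q (g • x)]
    rw [AlgEquiv.smul_def, AlgEquiv.smul_def, Algebra.smul_def, Algebra.smul_def, map_mul, g.commutes]
  obtain ⟨P, I, hPn, hIn, hP, hIP, hcyc, hCI⟩ := ramG p n hn (G := M ≃ₐ[k] M) ζ hζ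
  haveI := C_normal (k := k) hζ
  haveI := KF_normal (k := k) hζ
  obtain ⟨g, hg⟩ := B3 p n hn E.fixingSubgroup E'.fixingSubgroup P I
    (adjoin k {ζ}).fixingSubgroup (KF k ζ (p ^ n - 1)).fixingSubgroup
    (coatom_of_prim E (by omega) hprim)
    (by rw [← finrank_eq_fixingSubgroup_index, hE])
    (coatom_of_prim E' (by omega) hprim') hP hIP
    (by
      obtain ⟨g₀, -, h⟩ := hcyc ⊤
      exact ⟨g₀, fun g => h g trivial⟩)
    (hcyc _)
    (fun c hc x hx => hCI c (mem_C.1 hc) x hx)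
    KF_le_C
    (fun c hc d hd => KF_comm hζ c d (mem_C.1 hc) (mem_C.1 hd))
    (fun c hc => KF_pow hζ c (mem_C.1 hc))
    (fun X _ h1 h2 => kummer hζ X h1 h2)
    (C_comm hζ)
    (by
      rintro rfl
      rw [pow_one] at hζ
      obtain ⟨z, hz⟩ := prim_mem_padic p ζ hζ
      rw [eq_top_iff]
      intro g _
      rw [mem_C, ← hz, IsScalarTower.algebraMap_apply ℚ_[p] k M, g.commutes])
    (by rw [inf_comm, inf_comm _ E'.fixingSubgroup, ← fixingSubgroup_sup, ← fixingSubgroup_sup,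
      hcomp])
  have hle : E' ≤ E.map (g : M →ₐ[k] M) := by
    rw [← IsGalois.fixedField_fixingSubgroup (E.map (g : M →ₐ[k] M)), le_iff_le]
    intro σ hσ
    have h2 : g⁻¹ * σ * g ∈ E.fixingSubgroup := by
      refine (IntermediateField.mem_fixingSubgroup_iff _ _).2 fun x hx => ?_
      have h3 := (IntermediateField.mem_fixingSubgroup_iff _ _).1 hσ (g x) ⟨x, hx, rfl⟩
      have h3' : σ (g x) = g x := h3
      change g⁻¹ (σ (g x)) = x
      rw [h3']
      change (g⁻¹ * g) x = x
      rw [inv_mul_cancel]; rfl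
    have := hg _ h2
    simpa [mul_assoc] using this
  have heq : E' = E.map (g : M →ₐ[k] M) := by
    apply eq_of_le_of_finrank_eq hle
    rw [hE', ← hE]
    exact (equivMap E (g : M →ₐ[k] M)).toLinearEquiv.finrank_eq
  exact ⟨(equivMap E (g : M →ₐ[k] M)).trans (equivOfEq heq.symm)⟩

lemma exists_fin_gal {K Ω : Type*} [Field K] [Field Ω] [Algebra K Ω] [IsAlgClosed Ω]
    [Algebra.IsAlgebraic K Ω] [CharZero K] (S : Finset Ω) :
    ∃ M : IntermediateField K Ω, FiniteDimensional K M ∧ IsGalois K M ∧ ∀ x ∈ S, x ∈ M := by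
  haveI : FiniteDimensional K (adjoin K (S : Set Ω)) :=
    finiteDimensional_adjoin fun x _ => Algebra.IsIntegral.isIntegral x
  haveI : IsAlgClosure K Ω := ⟨inferInstance, inferInstance⟩
  refine ⟨normalClosure K (adjoin K (S : Set Ω)) Ω, inferInstance, ?_, ?_⟩
  · exact ⟨⟩
  · intro x hx
    exact le_normalClosure _ (subset_adjoin K _ hx)

lemma sup_side {K Ω : Type*} [Field K] [Field Ω] [Algebra K Ω] [Algebra.IsAlgebraic K Ω]
    [CharZero K] (E E' : IntermediateField K Ω) [FiniteDimensional K E] (B : Set Ω)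
    (h : E ≤ E' ⊔ adjoin K B) :
    ∃ T : Finset Ω, (∀ x ∈ T, x ∈ E' ∨ x ∈ B) ∧ E ≤ adjoin K (T : Set Ω) := by
  obtain ⟨α, hα⟩ := Field.exists_primitive_element K E
  have hE : E = adjoin K {(α : Ω)} := by
    have := congrArg lift hα
    rw [lift_adjoin_simple, lift_top] at this
    exact this.symm
  have h1 : (α : Ω) ∈ adjoin K ((E' : Set Ω) ∪ B) := by
    rw [adjoin_union, adjoin_self]
    exact h α.2
  obtain ⟨T, hT, hαT⟩ := exists_finset_of_mem_adjoin h1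
  refine ⟨T, fun x hx => hT hx, ?_⟩
  rw [hE, adjoin_simple_le_iff]
  exact hαT

lemma restrict_prim {K Ω : Type*} [Field K] [Field Ω] [Algebra K Ω] (E M : IntermediateField K Ω)
    (hEM : E ≤ M) (hprim : ∀ F : IntermediateField K Ω, F ≤ E → F = ⊥ ∨ F = E)
    (F : IntermediateField K M) (hF : F ≤ restrict hEM) : F = ⊥ ∨ F = restrict hEM := by
  have h1 : lift F ≤ E := by
    rw [← lift_restrict hEM]
    exact map_mono _ hF
  rcases hprim _ h1 with h | h
  · left
    apply lift_injective
    rw [h, lift_bot]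
  · right
    apply lift_injective
    rw [h, lift_restrict]

lemma restrict_side {K Ω : Type*} [Field K] [Field Ω] [Algebra K Ω]
    (E E' M : IntermediateField K Ω) (hEM : E ≤ M) (hEM' : E' ≤ M) (e : ℕ) (ζ : M)
    (T : Finset Ω) (hTM : ∀ x ∈ T, x ∈ M)
    (hT : ∀ x ∈ T, x ∈ E' ∨ (x = ζ ∨ x ^ e ∈ adjoin K {(ζ : Ω)}))
    (hE : E ≤ adjoin K (T : Set Ω)) :
    restrict hEM ≤ restrict hEM' ⊔ KF K ζ e := by
  have h1 : E ≤ lift (restrict hEM' ⊔ KF K ζ e) := by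
    refine hE.trans (adjoin_le_iff.2 fun x hx => ?_)
    refine (mem_lift (⟨x, hTM x hx⟩ : M)).2 ?_
    rcases hT x hx with h | h
    · exact (le_sup_left : restrict hEM' ≤ _) ((mem_restrict hEM' _).2 h)
    · refine (le_sup_right : KF K ζ e ≤ _) (subset_adjoin K _ ?_)
      rcases h with h | h
      · exact Or.inl (Subtype.ext h)
      · right
        rw [← lift_adjoin_simple] at h
        exact (mem_lift ((⟨x, hTM x hx⟩ : M) ^ e)).1 h
  intro x hx
  have h2 : (x : Ω) ∈ E := by
    have := (mem_lift x).2 hx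
    rwa [lift_restrict] at this
  exact (mem_lift x).1 (h1 h2)

end Final

theorem stmt_13 (p : ℕ) [hp : Fact p.Prime] (n : ℕ) (hn : 1 ≤ n)
    (Ω : Type) [Field Ω] [Algebra ℚ_[p] Ω] [IsAlgClosure ℚ_[p] Ω]
    (K : IntermediateField ℚ_[p] Ω) [FiniteDimensional ℚ_[p] ↥K]
    (ζ : Ω) (hζ : IsPrimitiveRoot ζ (p ^ n - 1))
    (Kn : IntermediateField ↥K Ω) (hKn : Kn = IntermediateField.adjoin ↥K {ζ})
    (Ln : IntermediateField ↥K Ω)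
    (hLn : Ln = Kn ⊔ IntermediateField.adjoin ↥K {x : Ω | x ^ (p ^ n - 1) ∈ Kn})
    (E E' : IntermediateField ↥K Ω)
    (hE : Module.finrank ↥K ↥E = p ^ n) (hE' : Module.finrank ↥K ↥E' = p ^ n)
    (hprim : ∀ F : IntermediateField ↥K Ω, F ≤ E → F = ⊥ ∨ F = E)
    (hprim' : ∀ F : IntermediateField ↥K Ω, F ≤ E' → F = ⊥ ∨ F = E')
    (hcomp : E ⊔ Ln = E' ⊔ Ln) :
    Nonempty (↥E ≃ₐ[↥K] ↥E') := by
  classical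
  have hpos : 0 < p ^ n := pow_pos hp.out.pos n
  haveI : IsAlgClosed Ω := IsAlgClosure.isAlgClosed ℚ_[p]
  haveI : Algebra.IsAlgebraic ℚ_[p] Ω := IsAlgClosure.isAlgebraic
  haveI : Algebra.IsAlgebraic K Ω := Algebra.IsAlgebraic.tower_top (K := ℚ_[p]) K
  haveI : CharZero K := charZero_of_injective_algebraMap (algebraMap ℚ_[p] K).injective
  haveI : FiniteDimensional K E := FiniteDimensional.of_finrank_pos (by omega)
  haveI : FiniteDimensional K E' := FiniteDimensional.of_finrank_pos (by omega)
  have hLn' : Ln = IntermediateField.adjoin K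
      ({ζ} ∪ {x : Ω | x ^ (p ^ n - 1) ∈ IntermediateField.adjoin K {ζ}}) := by
    rw [IntermediateField.adjoin_union, hLn, hKn]
  rw [hLn'] at hcomp
  obtain ⟨T, hT, hET⟩ := sup_side E E' _ (le_sup_left.trans hcomp.le)
  obtain ⟨T', hT', hET'⟩ := sup_side E' E _ (le_sup_left.trans hcomp.ge)
  obtain ⟨M, hM1, hM2, hM3⟩ := exists_fin_gal (K := K) (T ∪ T' ∪ {ζ})
  have hEM : E ≤ M := hET.trans (IntermediateField.adjoin_le_iff.2 fun x hx =>
    hM3 x (by simp [Finset.mem_coe.1 hx]))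
  have hEM' : E' ≤ M := hET'.trans (IntermediateField.adjoin_le_iff.2 fun x hx =>
    hM3 x (by simp [Finset.mem_coe.1 hx]))
  have hζM : ζ ∈ M := hM3 ζ (by simp)
  haveI : FiniteDimensional ℚ_[p] M := FiniteDimensional.trans ℚ_[p] K M
  have hζ' : IsPrimitiveRoot (⟨ζ, hζM⟩ : M) (p ^ n - 1) :=
    IsPrimitiveRoot.of_map_of_injective (f := M.val) hζ Subtype.val_injective
  obtain ⟨φ⟩ := main_finite p n hn (k := K) (M := M) ⟨ζ, hζM⟩ hζ'
    (IntermediateField.restrict hEM) (IntermediateField.restrict hEM')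
    (by rw [← hE]; exact (IntermediateField.restrictAlgEquiv hEM).toLinearEquiv.finrank_eq.symm)
    (by rw [← hE']; exact (IntermediateField.restrictAlgEquiv hEM').toLinearEquiv.finrank_eq.symm)
    (restrict_prim E M hEM hprim) (restrict_prim E' M hEM' hprim')
    (le_antisymm
      (sup_le (restrict_side E E' M hEM hEM' _ ⟨ζ, hζM⟩ T
        (fun x hx => hM3 x (by simp [hx])) (fun x hx => hT x hx) hET) le_sup_right)
      (sup_le (restrict_side E' E M hEM' hEM _ ⟨ζ, hζM⟩ T'
        (fun x hx => hM3 x (by simp [hx])) (fun x hx => hT' x hx) hET') le_sup_right))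
  exact ⟨(IntermediateField.restrictAlgEquiv hEM).trans
    (φ.trans (IntermediateField.restrictAlgEquiv hEM').symm)⟩
end
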